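/- arXiv:0904.1393 — 3 statements merged into one kernel-verified Lean document; each statement's English description precedes it below -/
import Mathlib

section
/- Consider the equation x″ + f(t, x/t) = 0 for t ≥ t₀ ≥ 1, where f : [t₀,∞) × ℝ → ℝ is continuous with continuous partial derivative ∂f/∂v, and assume: (i) v·f(t,v) ≤ 0 and ∂f/∂v(t,v) ≤ 0 for all t ≥ t₀, v ∈ ℝ; (ii) |f(t,v)| ≤ a(t)·g(|v|) for all t ≥ t₀, v ∈ ℝ, where a : [t₀,∞) → [0,∞) and g : [0,∞) → [0,∞) are continuous, g(α) > 0 for every α > 0, g is monotone nondecreasing; (iii) K := ∫_{t₀}^{∞} t·a(t) dt < +∞ and ∫_{1}^{∞} dξ/g(ξ) < +∞. Then every solution x of the equation whose initial data u₀ = t₀x′(t₀) − x(t₀), v₀ = x(t₀)/t₀ satisfy (4/t₀)·(K + c/g(1)) < ∫_{1+|v₀|}^{∞} dξ/g(ξ), where c = 1 + u₀²/2, is defined on all of [t₀,∞) and satisfies either x(t) = o(t) as t → +∞, or x(t) = x₁t + x₂ + o(1) with x₁ ≠ 0 as t → +∞. -/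
open Filter Set Asymptotics MeasureTheory


lemma apriori_bound {t₀ t₁ K W : ℝ} (ht₀ : 1 ≤ t₀) (h01 : t₀ ≤ t₁) (u v u' b g : ℝ → ℝ)
    (hv : ∀ t ∈ Icc t₀ t₁, HasDerivAt v (u t / t ^ 2) t)
    (hu : ∀ t ∈ Icc t₀ t₁, HasDerivAt u (u' t) t)
    (hu'c : ContinuousOn u' (Icc t₀ t₁))
    (hub : ∀ t ∈ Icc t₀ t₁, |u' t| ≤ b t * g |v t|)
    (hbc : ContinuousOn b (Icc t₀ t₁)) (hb : ∀ t ∈ Icc t₀ t₁, 0 ≤ b t)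
    (hK : ∀ t ∈ Icc t₀ t₁, ∫ s in t₀..t, b s ≤ K)
    (hg_cont : ContinuousOn g (Ici 0))
    (hg_pos : ∀ s : ℝ, 0 < s → 0 < g s)
    (hg_mono : MonotoneOn g (Ici 0))
    (hW : 1 + |v t₀| ≤ W)
    (hC : (|u t₀| / g 1 + K) / t₀ < ∫ ξ in (1 + |v t₀|)..W, 1 / g ξ) :
    |v t₁| ≤ W ∧ |u t₁| ≤ |u t₀| + K * g W := by
  have hg1 : 0 < g 1 := hg_pos 1 one_pos
  have hK0 : 0 ≤ K := by simpa using hK t₀ ⟨le_rfl, h01⟩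
  have huc : ContinuousOn u (Icc t₀ t₁) := fun t ht => (hu t ht).continuousAt.continuousWithinAt
  have hvc : ContinuousOn v (Icc t₀ t₁) := fun t ht => (hv t ht).continuousAt.continuousWithinAt
  have hqc : ContinuousOn (fun s => u s / s ^ 2) (Icc t₀ t₁) := by
    refine huc.div (by fun_prop) ?_
    intro s hs
    have : 0 < s := by linarith [hs.1]
    positivity
  set q : ℝ → ℝ := fun s => |u (projIcc t₀ t₁ h01 s)| / ((projIcc t₀ t₁ h01 s : ℝ)) ^ 2 with hq
  have hqcont : Continuous q := by
    have : ContinuousOn (fun s => |u s / s ^ 2|) (Icc t₀ t₁) := hqc.abs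
    have h2 := (continuousOn_iff_continuous_domRestrict.1 this).comp (continuous_projIcc (h := h01))
    refine h2.congr ?_
    intro s
    simp [hq, abs_div]
  have hq_eq : ∀ s ∈ Icc t₀ t₁, q s = |u s| / s ^ 2 := by
    intro s hs
    simp [hq, projIcc_of_mem h01 hs]
  have hq_nn : ∀ s, 0 ≤ q s := fun s => by simp only [hq]; positivity
  set k : ℝ → ℝ := fun ξ => 1 / g (max ξ 1) with hk
  have hkpos : ∀ ξ, 0 < g (max ξ 1) := fun ξ => hg_pos _ (by positivity)
  have hkcont : Continuous k := by
    refine Continuous.div continuous_const ?_ (fun ξ => (hkpos ξ).ne')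
    exact hg_cont.comp_continuous (by fun_prop) (fun ξ => mem_Ici.2 (le_trans zero_le_one (le_max_right _ _)))
  set A := 1 + |v t₀| with hA
  have hA1 : 1 ≤ A := by simp [hA]
  set w : ℝ → ℝ := fun t => A + ∫ s in t₀..t, q s with hw
  have hwd : ∀ t, HasDerivAt w (q t) t := fun t =>
    (intervalIntegral.integral_hasDerivAt_right (hqcont.intervalIntegrable _ _)
      hqcont.stronglyMeasurable.stronglyMeasurableAtFilter hqcont.continuousAt).const_add A
  have hwmono : Monotone w := monotone_of_hasDerivAt_nonneg hwd hq_nn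
  have hw0 : w t₀ = A := by simp [hw]
  have hwA : ∀ t, t₀ ≤ t → A ≤ w t := fun t ht => hw0 ▸ hwmono ht
  have sub : ∀ t ∈ Icc t₀ t₁, uIcc t₀ t ⊆ Icc t₀ t₁ := by
    intro t ht
    rw [uIcc_of_le ht.1]
    exact Icc_subset_Icc le_rfl ht.2
  have hvw : ∀ t ∈ Icc t₀ t₁, |v t| ≤ w t := by
    intro t ht
    have e := intervalIntegral.integral_eq_sub_of_hasDerivAt (fun s hs => hv s (sub t ht hs))
      ((hqc.mono (sub t ht)).intervalIntegrable)
    have n := intervalIntegral.norm_integral_le_of_norm_le (f := fun s => u s / s ^ 2) (g := q)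
      (μ := volume) ht.1
      (Eventually.of_forall fun s hs => by
        rw [hq_eq s ⟨hs.1.le, hs.2.trans ht.2⟩, Real.norm_eq_abs, abs_div, abs_of_nonneg (sq_nonneg s)])
      (hqcont.intervalIntegrable _ _)
    rw [e, Real.norm_eq_abs] at n
    have := abs_sub_abs_le_abs_sub (v t) (v t₀)
    simp only [hw, hA]
    linarith
  have huw : ∀ t ∈ Icc t₀ t₁, |u t| ≤ |u t₀| + K * g (w t) := by
    intro t ht
    have hbi : IntervalIntegrable b volume t₀ t := (hbc.mono (sub t ht)).intervalIntegrable
    have e := intervalIntegral.integral_eq_sub_of_hasDerivAt (fun s hs => hu s (sub t ht hs))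
      ((hu'c.mono (sub t ht)).intervalIntegrable)
    have n := intervalIntegral.norm_integral_le_of_norm_le (f := u') (g := fun s => b s * g (w t))
      (μ := volume) ht.1
      (Eventually.of_forall fun s hs => by
        have hs' : s ∈ Icc t₀ t₁ := ⟨hs.1.le, hs.2.trans ht.2⟩
        refine (hub s hs').trans (mul_le_mul_of_nonneg_left ?_ (hb s hs'))
        refine hg_mono (mem_Ici.2 (abs_nonneg _)) ?_ ((hvw s hs').trans (hwmono hs.2))
        exact le_trans (by linarith) (hwA t ht.1))
      (hbi.mul_const _)
    rw [e, Real.norm_eq_abs, intervalIntegral.integral_mul_const] at n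
    have := abs_sub_abs_le_abs_sub (u t) (u t₀)
    have hgw : 0 < g (w t) := hg_pos _ (by linarith [hwA t ht.1])
    have := mul_le_mul_of_nonneg_right (hK t ht) hgw.le
    linarith
  set C := |u t₀| / g 1 + K with hCdef
  have hC0 : 0 ≤ C := by positivity
  have huC : ∀ t ∈ Icc t₀ t₁, |u t| ≤ C * g (w t) := by
    intro t ht
    refine (huw t ht).trans ?_
    have hgw : g 1 ≤ g (w t) := hg_mono (by simp) (by show (0:ℝ) ≤ _; linarith [hwA t ht.1])
      (by linarith [hwA t ht.1])
    have : |u t₀| = |u t₀| / g 1 * g 1 := by field_simp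
    have h3 : |u t₀| / g 1 * g 1 ≤ |u t₀| / g 1 * g (w t) := by gcongr
    rw [hCdef, add_mul]; linarith
  set G : ℝ → ℝ := fun z => ∫ ξ in A..z, k ξ with hG
  have hGd : ∀ z, HasDerivAt G (k z) z := fun z =>
    (intervalIntegral.integral_hasDerivAt_right (hkcont.intervalIntegrable _ _)
      hkcont.stronglyMeasurable.stronglyMeasurableAtFilter hkcont.continuousAt)
  have hkp : ∀ z, 0 < k z := fun z => by have := hkpos z; simp only [hk]; positivity
  have hGmono : StrictMono G := strictMono_of_hasDerivAt_pos hGd hkp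
  have hHd : ∀ t ∈ Icc t₀ t₁, HasDerivAt (fun t => G (w t) + C * t⁻¹)
      (k (w t) * q t + C * (-(t ^ 2)⁻¹)) t := by
    intro t ht
    exact ((hGd (w t)).comp t (hwd t)).add
      ((hasDerivAt_inv (ne_of_gt (by linarith [ht.1]))).const_mul C)
  have hanti : AntitoneOn (fun t => G (w t) + C * t⁻¹) (Icc t₀ t₁) := by
    refine antitoneOn_of_deriv_nonpos (convex_Icc _ _)
      (fun t ht => (hHd t ht).continuousAt.continuousWithinAt)
      (fun t ht => (hHd t (interior_subset ht)).differentiableAt.differentiableWithinAt) ?_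
    intro t ht
    have ht' := interior_subset ht
    rw [(hHd t ht').deriv, hq_eq t ht']
    have htp : 0 < t := by linarith [ht'.1]
    have hwt : 1 ≤ w t := hA1.trans (hwA t ht'.1)
    have hgw : 0 < g (w t) := hg_pos _ (by linarith)
    have h1 := huC t ht'
    simp only [hk, max_eq_left hwt]
    have : 1 / g (w t) * (|u t| / t ^ 2) + C * -(t ^ 2)⁻¹ = (|u t| - C * g (w t)) / (g (w t) * t ^ 2) := by
      field_simp
      ring
    rw [this]
    exact div_nonpos_of_nonpos_of_nonneg (by linarith) (by positivity)
  have hfin := hanti ⟨le_rfl, h01⟩ ⟨h01, le_rfl⟩ h01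
  have hGA : G A = 0 := by simp [hG]
  have hGW : G W = ∫ ξ in A..W, 1 / g ξ := by
    refine intervalIntegral.integral_congr ?_
    intro ξ hξ
    rw [uIcc_of_le hW] at hξ
    simp [hk, max_eq_left (hA1.trans hξ.1)]
  have hwW : w t₁ < W := by
    rw [← hGmono.lt_iff_lt, hGW]
    refine lt_of_le_of_lt ?_ hC
    simp only [hw0, hGA] at hfin
    have : 0 ≤ C * t₁⁻¹ := by
      have : 0 < t₁ := by linarith
      positivity
    rw [div_eq_mul_inv]
    linarith
  have m1 : t₁ ∈ Icc t₀ t₁ := ⟨h01, le_rfl⟩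
  refine ⟨(hvw _ m1).trans hwW.le, (huw _ m1).trans ?_⟩
  have : g (w t₁) ≤ g W := hg_mono (by show (0:ℝ) ≤ _; linarith [hwA t₁ h01])
    (by show (0:ℝ) ≤ _; linarith) hwW.le
  gcongr

lemma glue_deriv {T s₀ D : ℝ} (hs : s₀ < T) (p p' q : ℝ → ℝ)
    (hp : ∀ t ∈ Ico s₀ T, HasDerivAt p (p' t) t)
    (hpl : Tendsto p (nhdsWithin T (Iio T)) (nhds (q T)))
    (hpl' : Tendsto p' (nhdsWithin T (Iio T)) (nhds D))
    (hq : HasDerivWithinAt q D (Ici T) T) :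
    HasDerivAt (fun t => if t < T then p t else q t) D T := by
  set y := fun t => if t < T then p t else q t with hy
  have hIo : Ioo s₀ T ∈ nhdsWithin T (Iio T) := Ioo_mem_nhdsLT hs
  have hyd : ∀ t ∈ Ioo s₀ T, HasDerivAt y (p' t) t := by
    intro t ht
    refine (hp t ⟨ht.1.le, ht.2⟩).congr_of_eventuallyEq ?_
    filter_upwards [Iio_mem_nhds ht.2] with r hr
    simp [hy, mem_Iio.1 hr]
  have hyT : y T = q T := by simp [hy]
  have hL : HasDerivWithinAt y D (Iic T) T := by
    refine hasDerivWithinAt_Iic_of_tendsto_deriv (s := Ioo s₀ T)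
      (fun t ht => (hyd t ht).differentiableAt.differentiableWithinAt) ?_ hIo ?_
    · unfold ContinuousWithinAt
      rw [hyT]
      have : Tendsto p (nhdsWithin T (Ioo s₀ T)) (nhds (q T)) :=
        hpl.mono_left (nhdsWithin_mono _ Ioo_subset_Iio_self)
      refine this.congr' ?_
      filter_upwards [self_mem_nhdsWithin] with r hr
      simp [hy, hr.2]
    · refine hpl'.congr' ?_
      filter_upwards [hIo] with r hr
      exact (hyd r hr).deriv.symm
  have hR : HasDerivWithinAt y D (Ici T) T := by
    refine hq.congr ?_ hyT
    intro r hr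
    simp [hy, not_lt.2 (mem_Ici.1 hr)]
  have := hL.union hR
  rwa [Iic_union_Ici, hasDerivWithinAt_univ] at this

lemma left_limit {T s₀ B : ℝ} (hs : s₀ < T) (p p' : ℝ → ℝ)
    (hp : ∀ t ∈ Ico s₀ T, HasDerivAt p (p' t) t) (hB : ∀ t ∈ Ico s₀ T, |p' t| ≤ B) :
    ∃ P B', Tendsto p (nhdsWithin T (Iio T)) (nhds P) ∧ ∀ t ∈ Ico s₀ T, |p t| ≤ B' := by
  have hlip : LipschitzOnWith B.toNNReal p (Ico s₀ T) := by
    refine Convex.lipschitzOnWith_of_nnnorm_hasDerivWithin_le (convex_Ico _ _)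
      (fun t ht => (hp t ht).hasDerivWithinAt) ?_
    intro t ht
    rw [← NNReal.coe_le_coe, coe_nnnorm, Real.norm_eq_abs]
    exact (hB t ht).trans (Real.le_coe_toNNReal B)
  obtain ⟨h, hh, heq⟩ := hlip.extend_real
  obtain ⟨B', hB'⟩ := (isCompact_Icc (a := s₀) (b := T)).exists_bound_of_continuousOn
    hh.continuous.continuousOn
  refine ⟨h T, B', ?_, ?_⟩
  · refine (hh.continuous.continuousAt.mono_left nhdsWithin_le_nhds).congr' ?_
    filter_upwards [Ico_mem_nhdsLT hs] with r hr
    exact (heq hr).symm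
  · intro t ht
    rw [heq ht]
    exact hB' t ⟨ht.1, ht.2.le⟩

lemma local_exist {t₀ T X P : ℝ} (ht₀ : 1 ≤ t₀) (hT : t₀ < T) (f fv : ℝ → ℝ → ℝ)
    (hf_cont : ContinuousOn (fun p : ℝ × ℝ => f p.1 p.2) (Ici t₀ ×ˢ univ))
    (hfv : ∀ t ∈ Ici t₀, ∀ v : ℝ, HasDerivAt (f t) (fv t v) v)
    (hfv_cont : ContinuousOn (fun p : ℝ × ℝ => fv p.1 p.2) (Ici t₀ ×ˢ univ)) :
    ∃ ε > 0, ∃ z z' : ℝ → ℝ, z T = X ∧ z' T = P ∧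
      ∀ t ∈ Icc T (T + ε), HasDerivWithinAt z (z' t) (Icc T (T + ε)) t ∧
        HasDerivWithinAt z' (-f t (z t / t)) (Icc T (T + ε)) t := by
  set R := |X| + 1 with hR
  have hcomp : IsCompact (Icc T (T + 1) ×ˢ Icc (-R) R) := isCompact_Icc.prod isCompact_Icc
  have hsub : Icc T (T + 1) ×ˢ Icc (-R) R ⊆ Ici t₀ ×ˢ (univ : Set ℝ) := by
    rintro ⟨t, v⟩ ⟨h1, -⟩
    exact ⟨hT.le.trans h1.1, mem_univ _⟩
  obtain ⟨B1, hB1⟩ := hcomp.exists_bound_of_continuousOn (hf_cont.mono hsub)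
  obtain ⟨B2, hB2⟩ := hcomp.exists_bound_of_continuousOn (hfv_cont.mono hsub)
  set L : ℝ := max (|P| + 1) B1 with hL
  have hLpos : 0 < L := lt_of_lt_of_le (by positivity) (le_max_left _ _)
  set ε : ℝ := min 1 (1 / L) with hε
  have hεpos : 0 < ε := by positivity
  have hin : ∀ t ∈ Icc T (T + ε), t ∈ Icc T (T + 1) :=
    fun t ht => ⟨ht.1, ht.2.trans (by linarith [min_le_left 1 (1 / L)])⟩
  have hball : ∀ t ∈ Icc T (T + ε), ∀ z ∈ Metric.closedBall ((X, P) : ℝ × ℝ) ((1 : NNReal) : ℝ),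
      z.1 / t ∈ Icc (-R) R ∧ |z.2| ≤ |P| + 1 := by
    intro t ht z hz
    rw [Metric.mem_closedBall, Prod.dist_eq, max_le_iff, Real.dist_eq, Real.dist_eq] at hz
    have h1 := abs_sub_abs_le_abs_sub z.1 X
    have h2 := abs_sub_abs_le_abs_sub z.2 P
    simp only [NNReal.coe_one] at hz
    have ht1 : 1 ≤ t := by linarith [ht.1]
    refine ⟨?_, by linarith [hz.2]⟩
    rw [mem_Icc, ← abs_le, abs_div, abs_of_pos (by linarith : 0 < t)]
    exact (div_le_self (abs_nonneg _) ht1).trans (by linarith [hz.1])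
  let F : ℝ → ℝ × ℝ → ℝ × ℝ := fun t z => (z.2, -f t (z.1 / t))
  have hPL : IsPicardLindelof F (tmin := T) (tmax := T + ε) ⟨T, le_rfl, by linarith⟩ (X, P) 1 0
      L.toNNReal (max 1 B2.toNNReal) := by
    constructor
    · intro t ht
      have ht1 : 1 ≤ t := by linarith [ht.1]
      refine LipschitzOnWith.of_dist_le_mul ?_
      intro z hz w hw
      obtain ⟨hz1, -⟩ := hball t ht z hz
      obtain ⟨hw1, -⟩ := hball t ht w hw
      have hkey : |f t (z.1 / t) - f t (w.1 / t)| ≤ B2 * |z.1 / t - w.1 / t| := by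
        have := Convex.norm_image_sub_le_of_norm_hasDerivWithin_le (f := f t) (f' := fv t)
          (s := Icc (-R) R) (C := B2)
          (fun v _ => (hfv t (hT.le.trans ht.1) v).hasDerivWithinAt)
          (fun v hv => hB2 (t, v) ⟨hin t ht, hv⟩) (convex_Icc _ _) hw1 hz1
        simpa [Real.norm_eq_abs] using this
      have hdiv : |z.1 / t - w.1 / t| ≤ |z.1 - w.1| := by
        rw [← sub_div, abs_div, abs_of_pos (by linarith : 0 < t)]
        exact div_le_self (abs_nonneg _) ht1
      rw [Prod.dist_eq, Prod.dist_eq]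
      simp only [F, Real.dist_eq, NNReal.coe_max, NNReal.coe_one]
      set m := max |z.1 - w.1| |z.2 - w.2| with hm
      have hm0 : 0 ≤ m := le_trans (abs_nonneg _) (le_max_left _ _)
      refine max_le ?_ ?_
      · calc |z.2 - w.2| ≤ 1 * m := by rw [one_mul]; exact le_max_right _ _
          _ ≤ _ := mul_le_mul_of_nonneg_right (le_max_left _ _) hm0
      · have e : |(-f t (z.1 / t)) - (-f t (w.1 / t))| = |f t (z.1 / t) - f t (w.1 / t)| := by
          rw [neg_sub_neg, abs_sub_comm]
        rw [e]
        calc _ ≤ B2 * |z.1 / t - w.1 / t| := hkey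
          _ ≤ max 1 (B2.toNNReal : ℝ) * |z.1 / t - w.1 / t| :=
            mul_le_mul_of_nonneg_right ((Real.le_coe_toNNReal B2).trans (le_max_right _ _))
              (abs_nonneg _)
          _ ≤ _ := mul_le_mul_of_nonneg_left (hdiv.trans (le_max_left _ _))
              (le_trans zero_le_one (le_max_left _ _))
    · intro z hz
      refine continuousOn_const.prodMk (ContinuousOn.neg ?_)
      refine hf_cont.comp (f := fun t : ℝ => (t, z.1 / t)) ?_ ?_
      · refine continuousOn_id.prodMk (continuousOn_const.div continuousOn_id ?_)
        intro t ht
        exact ne_of_gt (by show (0:ℝ) < t; linarith [ht.1])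
      · intro t ht
        exact ⟨hT.le.trans ht.1, mem_univ _⟩
    · intro t ht z hz
      obtain ⟨hz1, hz2⟩ := hball t ht z hz
      rw [Real.coe_toNNReal _ hLpos.le, Prod.norm_def]
      refine max_le ?_ ?_
      · exact hz2.trans (le_max_left _ _)
      · simp only [F, norm_neg]
        exact (hB1 (t, z.1 / t) ⟨hin t ht, hz1⟩).trans (le_max_right _ _)
    · rw [Real.coe_toNNReal _ hLpos.le]
      simp only [add_sub_cancel_left, sub_self, NNReal.coe_one, NNReal.coe_zero, sub_zero]
      rw [max_eq_left hεpos.le]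
      calc L * ε ≤ L * (1 / L) := by gcongr; exact min_le_right _ _
        _ = 1 := by field_simp
  obtain ⟨α, h0, hα⟩ := hPL.exists_eq_forall_mem_Icc_hasDerivWithinAt₀
  refine ⟨ε, hεpos, fun t => (α t).1, fun t => (α t).2, by simp [h0], by simp [h0], ?_⟩
  intro t ht
  exact ⟨(hα t ht).fst, (hα t ht).snd⟩

lemma extend_sol {t₀ T M : ℝ} (ht₀ : 1 ≤ t₀) (hT : t₀ < T) (f fv : ℝ → ℝ → ℝ)
    (hf_cont : ContinuousOn (fun p : ℝ × ℝ => f p.1 p.2) (Ici t₀ ×ˢ univ))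
    (hfv : ∀ t ∈ Ici t₀, ∀ v : ℝ, HasDerivAt (f t) (fv t v) v)
    (hfv_cont : ContinuousOn (fun p : ℝ × ℝ => fv p.1 p.2) (Ici t₀ ×ˢ univ))
    (x x' : ℝ → ℝ)
    (hx : ∀ t ∈ Ico t₀ T, HasDerivAt x (x' t) t)
    (hx' : ∀ t ∈ Ico t₀ T, HasDerivAt x' (-f t (x t / t)) t)
    (hM : ∀ t ∈ Ico t₀ T, |x t / t| ≤ M) :
    ∃ T' > T, ∃ y y' : ℝ → ℝ, (∀ t ∈ Ico t₀ T', HasDerivAt y (y' t) t) ∧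
      (∀ t ∈ Ico t₀ T', HasDerivAt y' (-f t (y t / t)) t) ∧ ∀ t < T, y t = x t := by
  have hcomp : IsCompact (Icc t₀ T ×ˢ Icc (-M) M) := isCompact_Icc.prod isCompact_Icc
  obtain ⟨B, hB⟩ := hcomp.exists_bound_of_continuousOn (hf_cont.mono (by
    rintro ⟨t, v⟩ ⟨h1, -⟩
    exact ⟨h1.1, mem_univ _⟩))
  obtain ⟨P, B', hP, hB'⟩ := left_limit hT x' _ hx' (B := B) (by
    intro t ht
    rw [abs_neg]
    exact hB (t, x t / t) ⟨⟨ht.1, ht.2.le⟩, abs_le.1 (hM t ht)⟩)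
  obtain ⟨X, -, hX, -⟩ := left_limit hT x x' hx hB'
  obtain ⟨ε, hε, z, z', hz0, hz0', hz⟩ := local_exist (X := X) (P := P) ht₀ hT f fv hf_cont hfv hfv_cont
  have hTm : T ∈ Icc T (T + ε) := ⟨le_rfl, by linarith⟩
  have hlimf : Tendsto (fun t => -f t (x t / t)) (nhdsWithin T (Iio T)) (nhds (-f T (X / T))) := by
    refine Tendsto.neg ?_
    have hc : ContinuousAt (fun p : ℝ × ℝ => f p.1 p.2) (T, X / T) :=
      hf_cont.continuousAt (prod_mem_nhds (Ici_mem_nhds hT) univ_mem)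
    have hid : Tendsto (fun t : ℝ => t) (nhdsWithin T (Iio T)) (nhds T) :=
      tendsto_id.mono_left nhdsWithin_le_nhds
    exact hc.tendsto.comp (hid.prodMk_nhds (hX.div hid (by linarith)))
  set y := fun t => if t < T then x t else z t with hy
  set y' := fun t => if t < T then x' t else z' t with hy'
  have hIci : Icc T (T + ε) ∈ nhdsWithin T (Ici T) := Icc_mem_nhdsGE (by linarith)
  refine ⟨T + ε, by linarith, y, y', ?_, ?_, ?_⟩
  · intro t ht
    rcases lt_trichotomy t T with h | h | h
    · have e : y' t = x' t := by simp [hy', h]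
      rw [e]
      refine (hx t ⟨ht.1, h⟩).congr_of_eventuallyEq ?_
      filter_upwards [Iio_mem_nhds h] with r hr
      simp [hy, mem_Iio.1 hr]
    · subst h
      have e : y' t = P := by simp [hy', hz0']
      rw [e]
      refine glue_deriv hT x x' z hx (by rwa [hz0]) hP ?_
      rw [← hz0']
      exact (hz t hTm).1.mono_of_mem_nhdsWithin hIci
    · have e : y' t = z' t := by simp [hy', not_lt.2 h.le]
      rw [e]
      refine ((hz t ⟨h.le, ht.2.le⟩).1.hasDerivAt (Icc_mem_nhds h ht.2)).congr_of_eventuallyEq ?_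
      filter_upwards [Ioi_mem_nhds h] with r hr
      simp [hy, not_lt.2 (mem_Ioi.1 hr).le]
  · intro t ht
    rcases lt_trichotomy t T with h | h | h
    · have e : y t = x t := by simp [hy, h]
      rw [e]
      refine (hx' t ⟨ht.1, h⟩).congr_of_eventuallyEq ?_
      filter_upwards [Iio_mem_nhds h] with r hr
      simp [hy', mem_Iio.1 hr]
    · subst h
      have e : y t = X := by simp [hy, hz0]
      rw [e]
      refine glue_deriv hT x' _ z' hx' (by rwa [hz0']) hlimf ?_
      have := (hz t hTm).2.mono_of_mem_nhdsWithin hIci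
      rwa [hz0] at this
    · have e : y t = z t := by simp [hy, not_lt.2 h.le]
      rw [e]
      refine ((hz t ⟨h.le, ht.2.le⟩).2.hasDerivAt (Icc_mem_nhds h ht.2)).congr_of_eventuallyEq ?_
      filter_upwards [Ioi_mem_nhds h] with r hr
      simp [hy', not_lt.2 (mem_Ioi.1 hr).le]
  · intro t ht
    simp [hy, ht]

/-- Theorem 1: consider `x″ + f(t, x/t) = 0`, `t ≥ t₀ ≥ 1`, with `f` continuous,
`∂f/∂v` continuous, `v·f(t,v) ≤ 0`, `∂f/∂v(t,v) ≤ 0`, `|f(t,v)| ≤ a(t)·g(|v|)` where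
`a ≥ 0`, `g ≥ 0` are continuous, `g` positive on `(0,∞)` and nondecreasing,
`K = ∫_{t₀}^{∞} t·a(t) dt < ∞` and `∫_{1}^{∞} dξ/g(ξ) < ∞`.  Then every (maximal, i.e.
non-extendable) solution `x` on `[t₀, T∞)` whose initial data `u₀ = t₀x′(t₀) − x(t₀)`,
`v₀ = x(t₀)/t₀` satisfy `(4/t₀)(K + c/g(1)) < ∫_{1+|v₀|}^{∞} dξ/g(ξ)` with `c = 1 + u₀²/2`
is defined on all of `[t₀, ∞)` (i.e. `T∞ = ⊤`) and satisfies either `x(t) = o(t)` or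
`x(t) = x₁t + x₂ + o(1)` with `x₁ ≠ 0`, as `t → +∞`. -/
theorem asymptotically_linear_solutions_via_Lyapunov
    (t₀ : ℝ) (ht₀ : 1 ≤ t₀) (f fv : ℝ → ℝ → ℝ)
    (hf_cont : ContinuousOn (fun p : ℝ × ℝ => f p.1 p.2) (Set.Ici t₀ ×ˢ Set.univ))
    (hfv : ∀ t ∈ Set.Ici t₀, ∀ v : ℝ, HasDerivAt (f t) (fv t v) v)
    (hfv_cont : ContinuousOn (fun p : ℝ × ℝ => fv p.1 p.2) (Set.Ici t₀ ×ˢ Set.univ))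
    (hsign : ∀ t ∈ Set.Ici t₀, ∀ v : ℝ, v * f t v ≤ 0)
    (hfv_nonpos : ∀ t ∈ Set.Ici t₀, ∀ v : ℝ, fv t v ≤ 0)
    (a g : ℝ → ℝ)
    (ha_cont : ContinuousOn a (Set.Ici t₀))
    (ha_nonneg : ∀ t ∈ Set.Ici t₀, 0 ≤ a t)
    (hg_cont : ContinuousOn g (Set.Ici 0))
    (hg_nonneg : ∀ s ∈ Set.Ici (0 : ℝ), 0 ≤ g s)
    (hg_pos : ∀ s : ℝ, 0 < s → 0 < g s)
    (hg_mono : MonotoneOn g (Set.Ici 0))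
    (hfg : ∀ t ∈ Set.Ici t₀, ∀ v : ℝ, |f t v| ≤ a t * g |v|)
    (hK : IntegrableOn (fun t => t * a t) (Set.Ici t₀))
    (hg_int : IntegrableOn (fun ξ => 1 / g ξ) (Set.Ici (1 : ℝ)))
    (Tinf : EReal) (hT : (t₀ : EReal) < Tinf)
    (x x' x'' : ℝ → ℝ)
    (hx : ∀ t : ℝ, t₀ ≤ t → (t : EReal) < Tinf → HasDerivAt x (x' t) t)
    (hx' : ∀ t : ℝ, t₀ ≤ t → (t : EReal) < Tinf → HasDerivAt x' (x'' t) t)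
    (heq : ∀ t : ℝ, t₀ ≤ t → (t : EReal) < Tinf → x'' t + f t (x t / t) = 0)
    (hmax : ∀ (y y' y'' : ℝ → ℝ) (T' : EReal), Tinf < T' →
      (∀ t : ℝ, t₀ ≤ t → (t : EReal) < T' → HasDerivAt y (y' t) t) →
      (∀ t : ℝ, t₀ ≤ t → (t : EReal) < T' → HasDerivAt y' (y'' t) t) →
      (∀ t : ℝ, t₀ ≤ t → (t : EReal) < T' → y'' t + f t (y t / t) = 0) →
      ¬ (∀ t : ℝ, t₀ ≤ t → (t : EReal) < Tinf → y t = x t))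
    (hinit : 4 / t₀ * ((∫ t in Set.Ici t₀, t * a t) +
        (1 + (t₀ * x' t₀ - x t₀) ^ 2 / 2) / g 1) <
      ∫ ξ in Set.Ici (1 + |x t₀ / t₀|), 1 / g ξ) :
    Tinf = ⊤ ∧
      ((fun t => x t) =o[atTop] (fun t : ℝ => t) ∨
        ∃ x₁ x₂ : ℝ, x₁ ≠ 0 ∧
          Tendsto (fun t => x t - (x₁ * t + x₂)) atTop (nhds 0)) := by
  have hx'f : ∀ t : ℝ, t₀ ≤ t → (t : EReal) < Tinf → HasDerivAt x' (-f t (x t / t)) t := by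
    intro t h1 h2
    have h3 := hx' t h1 h2
    rwa [show x'' t = -f t (x t / t) by linarith [heq t h1 h2]] at h3
  have hpos : ∀ t : ℝ, t₀ ≤ t → 0 < t := fun t ht => by linarith
  set u : ℝ → ℝ := fun t => t * x' t - x t with hu
  set v : ℝ → ℝ := fun t => x t / t with hv
  have hud : ∀ t : ℝ, t₀ ≤ t → (t : EReal) < Tinf → HasDerivAt u (t * -f t (v t)) t := by
    intro t h1 h2
    have h3 := ((hasDerivAt_id t).mul (hx'f t h1 h2)).sub (hx t h1 h2)
    refine h3.congr_deriv ?_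
    simp [hv]
  have hvd : ∀ t : ℝ, t₀ ≤ t → (t : EReal) < Tinf → HasDerivAt v (u t / t ^ 2) t := by
    intro t h1 h2
    have h3 := (hx t h1 h2).div (hasDerivAt_id t) (hpos t h1).ne'
    refine h3.congr_deriv ?_
    simp [hu, mul_comm]
  have hg1 : 0 < g 1 := hg_pos 1 one_pos
  set K := ∫ t in Set.Ici t₀, t * a t with hKdef
  have hbnn : ∀ t ∈ Ici t₀, 0 ≤ t * a t := fun t ht =>
    mul_nonneg (hpos t ht).le (ha_nonneg t ht)
  have hK0 : 0 ≤ K := setIntegral_nonneg measurableSet_Ici hbnn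
  have hKle : ∀ t, t₀ ≤ t → ∫ s in t₀..t, s * a s ≤ K := by
    intro t ht
    rw [intervalIntegral.integral_of_le ht]
    refine setIntegral_mono_set hK ?_ ?_
    · exact (ae_restrict_iff' measurableSet_Ici).2 (Eventually.of_forall hbnn)
    · exact (show Ioc t₀ t ⊆ Ici t₀ from fun s hs => hs.1.le).eventuallyLE
  set A := 1 + |v t₀| with hA
  have hA1 : 1 ≤ A := by simp [hA]
  -- choice of the a priori bound
  obtain ⟨W, hAW, hCW⟩ : ∃ W, A ≤ W ∧ (|u t₀| / g 1 + K) / t₀ < ∫ ξ in A..W, 1 / g ξ := by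
    have hlt : (|u t₀| / g 1 + K) / t₀ < ∫ ξ in Set.Ioi A, 1 / g ξ := by
      rw [← integral_Ici_eq_integral_Ioi]
      refine lt_of_le_of_lt ?_ hinit
      have h0 : 0 < t₀ := by linarith
      have h1 : |u t₀| ≤ 1 + (t₀ * x' t₀ - x t₀) ^ 2 / 2 := by
        show |u t₀| ≤ 1 + (u t₀) ^ 2 / 2
        rw [← sq_abs (u t₀)]
        nlinarith [sq_nonneg (|u t₀| - 1)]
      have h2 : |u t₀| / g 1 ≤ (1 + (t₀ * x' t₀ - x t₀) ^ 2 / 2) / g 1 := by gcongr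
      have h4 : 0 ≤ |u t₀| / g 1 := by positivity
      rw [div_mul_eq_mul_div]
      gcongr
      linarith
    have hlim := intervalIntegral_tendsto_integral_Ioi (f := fun ξ => 1 / g ξ) A
      (hg_int.mono_set (fun ξ hξ => hA1.trans (le_of_lt hξ))) tendsto_id
    obtain ⟨W, h1, h2⟩ := ((hlim.eventually (lt_mem_nhds hlt)).and (eventually_ge_atTop A)).exists
    exact ⟨W, h2, h1⟩
  have hcontf : ∀ t₁ : ℝ, (t₁ : EReal) < Tinf →
      ContinuousOn (fun t => t * -f t (v t)) (Icc t₀ t₁) := by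
    intro t₁ h1
    refine continuousOn_id.mul (ContinuousOn.neg ?_)
    refine hf_cont.comp (f := fun t : ℝ => (t, v t)) (continuousOn_id.prodMk ?_) ?_
    · intro t ht
      exact (hvd t ht.1 (lt_of_le_of_lt (EReal.coe_le_coe_iff.2 ht.2) h1)).continuousAt.continuousWithinAt
    · intro t ht
      exact ⟨ht.1, mem_univ _⟩
  have hbd : ∀ t : ℝ, t₀ ≤ t → (t : EReal) < Tinf → |v t| ≤ W ∧ |u t| ≤ |u t₀| + K * g W := by
    intro t₁ h1 h2
    have hlt : ∀ t ∈ Icc t₀ t₁, (t : EReal) < Tinf := fun t ht =>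
      lt_of_le_of_lt (EReal.coe_le_coe_iff.2 ht.2) h2
    refine apriori_bound ht₀ h1 u v (fun t => t * -f t (v t)) (fun t => t * a t) g
      (fun t ht => hvd t ht.1 (hlt t ht)) (fun t ht => hud t ht.1 (hlt t ht)) (hcontf t₁ h2) ?_
      (continuousOn_id.mul (ha_cont.mono Icc_subset_Ici_self)) (fun t ht => hbnn t ht.1)
      (fun t ht => hKle t ht.1) hg_cont hg_pos hg_mono hAW hCW
    intro t ht
    have h3 := hfg t ht.1 (v t)
    have h4 := hpos t ht.1
    rw [abs_mul, abs_neg, abs_of_pos h4, mul_assoc]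
    gcongr
  have htop : Tinf = ⊤ := by
    induction Tinf with
    | bot => simp at hT
    | top => rfl
    | coe T =>
      exfalso
      have hT' : t₀ < T := EReal.coe_lt_coe_iff.1 hT
      obtain ⟨T', hTT', y, y', hy, hy', hyx⟩ := extend_sol (M := W) ht₀ hT' f fv hf_cont hfv hfv_cont x x'
        (fun t ht => hx t ht.1 (EReal.coe_lt_coe_iff.2 ht.2))
        (fun t ht => hx'f t ht.1 (EReal.coe_lt_coe_iff.2 ht.2))
        (fun t ht => (hbd t ht.1 (EReal.coe_lt_coe_iff.2 ht.2)).1)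
      refine hmax y y' (fun t => -f t (y t / t)) T' (EReal.coe_lt_coe_iff.2 hTT')
        (fun t h1 h2 => hy t ⟨h1, EReal.coe_lt_coe_iff.1 h2⟩)
        (fun t h1 h2 => hy' t ⟨h1, EReal.coe_lt_coe_iff.1 h2⟩) (fun t _ _ => by ring)
        (fun t _ h2 => hyx t (EReal.coe_lt_coe_iff.1 h2))
  refine ⟨htop, ?_⟩
  subst htop
  have hW0 : 0 ≤ W := by linarith
  have hfc : ContinuousOn (fun t => t * -f t (v t)) (Ici t₀) := by
    refine continuousOn_id.mul (ContinuousOn.neg ?_)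
    refine hf_cont.comp (f := fun t : ℝ => (t, v t)) (continuousOn_id.prodMk ?_) ?_
    · intro t ht
      exact (hvd t ht (EReal.coe_lt_top t)).continuousAt.continuousWithinAt
    · intro t ht
      exact ⟨ht, mem_univ _⟩
  have huint : IntegrableOn (fun t => t * -f t (v t)) (Ioi t₀) := by
    refine IntegrableOn.mono_set ?_ Ioi_subset_Ici_self
    refine Integrable.mono' (hK.mul_const (g W)) (hfc.aestronglyMeasurable measurableSet_Ici) ?_
    refine (ae_restrict_iff' measurableSet_Ici).2 (Eventually.of_forall fun t ht => ?_)
    have h3 := hfg t ht (v t)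
    have h4 := hpos t ht
    have h5 : g |v t| ≤ g W := hg_mono (mem_Ici.2 (abs_nonneg _)) hW0 (hbd t ht (EReal.coe_lt_top t)).1
    have h6 := ha_nonneg t ht
    rw [Real.norm_eq_abs, abs_mul, abs_neg, abs_of_pos h4, mul_assoc]
    have h7 : a t * g |v t| ≤ a t * g W := by gcongr
    exact mul_le_mul_of_nonneg_left (h3.trans h7) h4.le
  have hulim := tendsto_limUnder_of_hasDerivAt_of_integrableOn_Ioi
    (fun t ht => hud t (le_of_lt ht) (EReal.coe_lt_top t)) huint
  have hvint : IntegrableOn (fun t => u t / t ^ 2) (Ioi t₀) := by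
    have h0 : 0 < t₀ := by linarith
    have hi := (integrableOn_Ioi_rpow_of_lt (a := -2) (by norm_num) h0).const_mul (|u t₀| + K * g W)
    refine Integrable.mono' hi (ContinuousOn.aestronglyMeasurable ?_ measurableSet_Ioi) ?_
    · intro t ht
      have h4 := hpos t (le_of_lt ht)
      exact ((hud t (le_of_lt ht) (EReal.coe_lt_top t)).continuousAt.div (by fun_prop)
        (by positivity)).continuousWithinAt
    · refine (ae_restrict_iff' measurableSet_Ioi).2 (Eventually.of_forall fun t ht => ?_)
      have h4 := hpos t (le_of_lt ht)
      have h5 := (hbd t (le_of_lt ht) (EReal.coe_lt_top t)).2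
      rw [Real.norm_eq_abs, abs_div, abs_of_nonneg (sq_nonneg t), Real.rpow_neg h4.le, div_eq_mul_inv]
      norm_cast
      gcongr
  have hvlim := tendsto_limUnder_of_hasDerivAt_of_integrableOn_Ioi
    (fun t ht => hvd t (le_of_lt ht) (EReal.coe_lt_top t)) hvint
  set U := limUnder atTop u
  set V := limUnder atTop v
  by_cases hV : V = 0
  · left
    rw [hV] at hvlim
    refine (isLittleO_iff_tendsto' ?_).2 hvlim
    filter_upwards [eventually_ge_atTop t₀] with t ht h0
    exact absurd h0 (hpos t ht).ne'
  · right
    refine ⟨V, -U, hV, ?_⟩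
    have hl : Tendsto (fun t => (v t - V) / t⁻¹) atTop (nhds (-U)) := by
      refine HasDerivAt.lhopital_zero_atTop (f' := fun t => u t / t ^ 2)
        (g' := fun t => -(t ^ 2)⁻¹) ?_ ?_ ?_ ?_ tendsto_inv_atTop_zero ?_
      · filter_upwards [eventually_ge_atTop t₀] with t ht
        exact (hvd t ht (EReal.coe_lt_top t)).sub_const V
      · filter_upwards [eventually_ge_atTop t₀] with t ht
        exact hasDerivAt_inv (hpos t ht).ne'
      · filter_upwards [eventually_ge_atTop t₀] with t ht
        have := hpos t ht
        exact neg_ne_zero.2 (by positivity)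
      · simpa using hvlim.sub_const V
      · refine hulim.neg.congr' ?_
        filter_upwards [eventually_ge_atTop t₀] with t ht
        have := hpos t ht
        field_simp
    have h2 := hl.sub_const (-U)
    rw [sub_self] at h2
    refine h2.congr' ?_
    filter_upwards [eventually_ge_atTop t₀] with t ht
    have := hpos t ht
    simp only [hv]
    field_simp
    ring
end

section
/- Consider the equation x″ + f(t, x/t) = 0 for t ≥ t₀ ≥ 1, where f : [t₀,∞) × ℝ → ℝ is continuous with continuous partial derivative ∂f/∂t, and assume that v·f(t,v) ≥ 0 and v·[3f(t,v) + t·(∂f/∂t)(t,v)] ≤ 0 for all t ≥ t₀ and all v ≠ 0. Then every solution x of the equation is defined on [t₀,∞) and satisfies either x(t) = o(t) as t → +∞, or x(t) = x₁t + x₂ + o(1) with x₁ ≠ 0 as t → +∞. -/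
open Filter Set Asymptotics

section Peano
open Topology MeasureTheory
open scoped NNReal

variable {E : Type*} [NormedAddCommGroup E] [NormedSpace ℝ E]

noncomputable def delayIter (G : ℝ → E → E) (T : ℝ) (z0 : E) (δ : ℝ) : ℕ → ℝ → E
  | 0 => fun _ => z0
  | n + 1 => fun t => z0 + ∫ s in T..(max t T), G s (delayIter G T z0 δ n (s - δ))

theorem delayIter_succ (G : ℝ → E → E) (T : ℝ) (z0 : E) (δ : ℝ) (n : ℕ) (t : ℝ) :
    delayIter G T z0 δ (n + 1) t =
      z0 + ∫ s in T..(max t T), G s (delayIter G T z0 δ n (s - δ)) := rfl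

theorem delayIter_lip [CompleteSpace E] (G : ℝ → E → E) (hG : Continuous (fun p : ℝ × E => G p.1 p.2))
    (M : ℝ≥0) (hM : ∀ s p, ‖G s p‖ ≤ M) (T : ℝ) (z0 : E) (δ : ℝ) (n : ℕ) :
    LipschitzWith M (delayIter G T z0 δ n) := by
  induction n with
  | zero => 
    have : delayIter G T z0 δ 0 = fun _ => z0 := rfl
    rw [this]
    exact (LipschitzWith.const z0).weaken (zero_le)
  | succ n ih =>
    have hc : Continuous (fun s => G s (delayIter G T z0 δ n (s - δ))) := by
      have h1 := ih.continuous
      exact hG.comp (continuous_id.prodMk (h1.comp (continuous_id.sub continuous_const)))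
    refine LipschitzWith.of_dist_le_mul fun a b => ?_
    simp only [delayIter, dist_add_left]
    rw [dist_eq_norm, intervalIntegral.integral_interval_sub_left (hc.intervalIntegrable _ _)
      (hc.intervalIntegrable _ _)]
    refine (intervalIntegral.norm_integral_le_of_norm_le_const (fun s _ => hM _ _)).trans ?_
    gcongr
    rw [Real.dist_eq]
    exact abs_max_sub_max_le_abs a b T

theorem delayIter_stab (G : ℝ → E → E) (T : ℝ) (z0 : E) (δ : ℝ) (hδ : 0 ≤ δ) (n : ℕ) :
    ∀ t ≤ T + n * δ, delayIter G T z0 δ (n + 1) t = delayIter G T z0 δ n t := by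
  induction n with
  | zero =>
    intro t ht
    simp only [Nat.cast_zero, zero_mul, add_zero] at ht
    simp [delayIter, max_eq_right ht]
  | succ n ih =>
    intro t ht
    rw [delayIter_succ G T z0 δ (n + 1), delayIter_succ G T z0 δ n]
    congr 1
    apply intervalIntegral.integral_congr
    intro s hs
    rw [uIcc_of_le (le_max_right _ _)] at hs
    have h0 : (0 : ℝ) ≤ n * δ := by positivity
    have : s ≤ T + n * δ + δ := by
      refine hs.2.trans (max_le ?_ (by linarith))
      push_cast at ht; linarith
    simp only
    rw [ih (s - δ) (by linarith)]

theorem peano_aux [ProperSpace E] (G : ℝ → E → E)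
    (hG : Continuous (fun p : ℝ × E => G p.1 p.2))
    (M : ℝ≥0) (hM : ∀ s p, ‖G s p‖ ≤ M) (T : ℝ) (z0 : E) :
    ∃ z : ℝ → E, z T = z0 ∧ ∀ t ∈ Icc T (T + 1), HasDerivAt z (G t (z t)) t := by
  let d : ℕ → ℝ := fun n => 1 / ((n : ℝ) + 1)
  have hd0 : ∀ n, 0 ≤ d n := fun n => by positivity
  have hdlim : Tendsto d atTop (𝓝 0) := tendsto_one_div_add_atTop_nhds_zero_nat
  let w : ℕ → ℝ → E := fun n => delayIter G T z0 (d n) (n + 1)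
  have hwl : ∀ n, LipschitzWith M (w n) := fun n => delayIter_lip G hG M hM T z0 _ _
  have hwT : ∀ n, w n T = z0 := fun n => by simp [w, delayIter]
  have hw : ∀ n, ∀ t ∈ Icc T (T + 1), w n t = z0 + ∫ s in T..t, G s (w n (s - d n)) := by
    intro n t ht
    have h := delayIter_stab G T z0 (d n) (hd0 n) (n + 1) t (by
      have : ((n + 1 : ℕ) : ℝ) * d n = 1 := by
        simp only [d]; push_cast; field_simp
      rw [this]; exact ht.2)
    simp only [w]
    rw [← h, delayIter_succ, max_eq_left ht.1]
  let S : Set C(ℝ, E) := {f | LipschitzWith M f ∧ f T = z0}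
  have hS : IsCompact S := by
    apply ArzelaAscoli.isCompact_of_equicontinuous
    · have : ContinuousMap.toFun '' S = {f : ℝ → E | LipschitzWith M f ∧ f T = z0} := by
        ext f; constructor
        · rintro ⟨g, hg, rfl⟩; exact hg
        · intro hf; exact ⟨⟨f, hf.1.continuous⟩, hf, rfl⟩
      rw [this]
      refine IsCompact.of_isClosed_subset
        (isCompact_univ_pi (fun t : ℝ => isCompact_closedBall z0 (M * dist t T))) ?_ ?_
      · have : {f : ℝ → E | LipschitzWith M f ∧ f T = z0} =
          (⋂ a : ℝ, ⋂ b : ℝ, {f : ℝ → E | dist (f a) (f b) ≤ M * dist a b}) ∩ {f | f T = z0} := by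
          ext f
          simp [lipschitzWith_iff_dist_le_mul]
        rw [this]
        refine IsClosed.inter (isClosed_iInter fun a => isClosed_iInter fun b => ?_) ?_
        · exact isClosed_le (by fun_prop) continuous_const
        · exact isClosed_eq (by fun_prop) continuous_const
      · rintro f ⟨hf, hfT⟩ t -
        rw [Metric.mem_closedBall, ← hfT]
        exact hf.dist_le_mul _ _
    · exact (LipschitzWith.uniformEquicontinuous _ M (fun f => f.2.1)).equicontinuous
  obtain ⟨g, hgS, φ, hφ, hlim⟩ := hS.tendsto_subseq
    (x := fun n => (⟨w n, (hwl n).continuous⟩ : C(ℝ, E))) (fun n => ⟨hwl n, hwT n⟩)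
  have hpt : ∀ t, Tendsto (fun n => w (φ n) t) atTop (𝓝 (g t)) := fun t =>
    ((continuous_eval_const t).tendsto g).comp hlim
  have hpt' : ∀ t, Tendsto (fun n => w (φ n) (t - d (φ n))) atTop (𝓝 (g t)) := by
    intro t
    have h1 : Tendsto (fun n => M * d (φ n)) atTop (𝓝 0) := by
      simpa using (hdlim.comp hφ.tendsto_atTop).const_mul (M : ℝ)
    refine tendsto_of_tendsto_of_dist (hpt t) ?_
    refine squeeze_zero (fun _ => dist_nonneg) (fun n => ?_) h1
    refine ((hwl (φ n)).dist_le_mul _ _).trans (le_of_eq ?_)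
    rw [Real.dist_eq, sub_sub_cancel, abs_of_nonneg (hd0 _)]
  have hgc : Continuous (fun s => G s (g s)) := hG.comp (continuous_id.prodMk g.continuous)
  have hgeq : ∀ t ∈ Icc T (T + 1), g t = z0 + ∫ s in T..t, G s (g s) := by
    intro t ht
    refine tendsto_nhds_unique (hpt t) ?_
    have : (fun n => w (φ n) t) = fun n => z0 + ∫ s in T..t, G s (w (φ n) (s - d (φ n))) := by
      funext n; exact hw _ t ht
    rw [this]
    refine tendsto_const_nhds.add ?_
    refine intervalIntegral.tendsto_integral_filter_of_dominated_convergence (fun _ => (M : ℝ))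
      ?_ ?_ ?_ ?_
    · refine Eventually.of_forall fun n => ?_
      have : Continuous (fun s => G s (w (φ n) (s - d (φ n)))) :=
        hG.comp (continuous_id.prodMk ((hwl _).continuous.comp (continuous_id.sub continuous_const)))
      exact this.aestronglyMeasurable
    · exact Eventually.of_forall fun n => Eventually.of_forall fun s _ => hM _ _
    · exact intervalIntegrable_const
    · refine Eventually.of_forall fun s _ => ?_
      exact ((hG.tendsto (s, g s)).comp (tendsto_const_nhds.prodMk_nhds (hpt' s)))
  refine ⟨fun t => z0 + ∫ s in T..t, G s (g s), by simp, fun t ht => ?_⟩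
  have h := (intervalIntegral.integral_hasDerivAt_right (hgc.intervalIntegrable T t)
    (hgc.stronglyMeasurableAtFilter _ _) hgc.continuousAt).const_add z0
  simp only
  rw [← hgeq t ht]
  exact h
end Peano


section Ext
open Topology
open scoped NNReal

theorem glue_deriv_s5 {x z dx dz : ℝ → ℝ} {t0 T η : ℝ} (ht : t0 < T)
    (hx : ∀ t ∈ Ico t0 T, HasDerivAt x (dx t) t)
    (hz : ∀ t ∈ Ico T (T + η), HasDerivAt z (dz t) t)
    (h1 : Tendsto x (𝓝[<] T) (𝓝 (z T))) (h2 : Tendsto dx (𝓝[<] T) (𝓝 (dz T))) :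
    ∀ t ∈ Ico t0 (T + η), HasDerivAt (fun t => if t < T then x t else z t)
      (if t < T then dx t else dz t) t := by
  intro t htt
  rcases lt_trichotomy t T with h | h | h
  · rw [if_pos h]
    refine (hx t ⟨htt.1, h⟩).congr_of_eventuallyEq ?_
    filter_upwards [Iio_mem_nhds h] with s hs
    exact if_pos hs
  · subst h
    rw [if_neg (lt_irrefl _)]
    have hr : HasDerivWithinAt (fun s => if s < t then x s else z s) (dz t) (Ici t) t := by
      refine (hz t ⟨le_rfl, htt.2⟩).hasDerivWithinAt.congr (fun s hs => ?_) ?_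
      · exact if_neg (not_lt.2 hs)
      · exact if_neg (lt_irrefl _)
    have hd : ∀ s ∈ Ioo t0 t, HasDerivAt (fun s => if s < t then x s else z s) (dx s) s := by
      intro s hs
      refine (hx s ⟨hs.1.le, hs.2⟩).congr_of_eventuallyEq ?_
      filter_upwards [Iio_mem_nhds hs.2] with r hr
      exact if_pos hr
    have hmem : Ioo t0 t ∈ 𝓝[<] t := Ioo_mem_nhdsLT ht
    have hl : HasDerivWithinAt (fun s => if s < t then x s else z s) (dz t) (Iic t) t := by
      refine hasDerivWithinAt_Iic_of_tendsto_deriv (s := Ioo t0 t)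
        (fun s hs => (hd s hs).differentiableAt.differentiableWithinAt) ?_ hmem ?_
      · have : Tendsto (fun s => if s < t then x s else z s) (𝓝[<] t) (𝓝 (z t)) := by
          refine h1.congr' ?_
          filter_upwards [self_mem_nhdsWithin] with s hs
          exact (if_pos hs).symm
        unfold ContinuousWithinAt
        simp only [lt_self_iff_false, if_false]
        exact this.mono_left (nhdsWithin_mono _ (fun s hs => hs.2))
      · refine h2.congr' ?_
        filter_upwards [hmem] with s hs
        exact (hd s hs).deriv.symm
    have := hl.union hr
    rwa [Iic_union_Ici, hasDerivWithinAt_univ] at this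
  · rw [if_neg (not_lt.2 h.le)]
    refine (hz t ⟨h.le, htt.2⟩).congr_of_eventuallyEq ?_
    filter_upwards [Ioi_mem_nhds h] with s hs
    exact if_neg (not_lt.2 (le_of_lt hs))

theorem lip_limit {x dx : ℝ → ℝ} {t0 T R : ℝ} (ht : t0 < T)
    (hx : ∀ t ∈ Ico t0 T, HasDerivAt x (dx t) t) (hb : ∀ t ∈ Ico t0 T, |dx t| ≤ R) :
    ∃ a, Tendsto x (𝓝[<] T) (𝓝 a) := by
  have hl : LipschitzOnWith R.toNNReal x (Ico t0 T) := by
    refine (convex_Ico t0 T).lipschitzOnWith_of_nnnorm_hasDerivWithin_le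
      (fun t h => (hx t h).hasDerivWithinAt) (fun t h => ?_)
    rw [← NNReal.coe_le_coe, coe_nnnorm, Real.norm_eq_abs]
    exact (hb t h).trans (Real.le_coe_toNNReal R)
  obtain ⟨g, hg, hgx⟩ := hl.extend_real
  refine ⟨g T, ?_⟩
  refine ((hg.continuous.tendsto T).mono_left nhdsWithin_le_nhds).congr' ?_
  filter_upwards [Ioo_mem_nhdsLT ht] with s hs
  exact (hgx ⟨hs.1.le, hs.2⟩).symm

theorem clamp_abs {r : ℝ} (hr : 0 ≤ r) (q : ℝ) : max (-r) (min r q) ∈ Icc (-r) r :=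
  ⟨le_max_left _ _, max_le (by linarith) (min_le_left _ _)⟩

theorem peano_second (h : ℝ → ℝ → ℝ) (hh : Continuous (fun p : ℝ × ℝ => h p.1 p.2)) (T a b : ℝ) :
    ∃ η > 0, ∃ z z' : ℝ → ℝ, z T = a ∧ z' T = b ∧ ∀ t ∈ Ico T (T + η),
      HasDerivAt z (z' t) t ∧ HasDerivAt z' (h t (z t)) t := by
  set r : ℝ := max |a| |b| + 1 with hr
  have hr0 : 0 < r := by positivity
  let c : ℝ → ℝ := fun q => max (-r) (min r q)
  have hc : Continuous c := by fun_prop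
  let e : ℝ → ℝ := fun s => max T (min (T + 1) s)
  have he : Continuous e := by fun_prop
  have heI : ∀ s, e s ∈ Icc T (T + 1) := fun s =>
    ⟨le_max_left _ _, max_le (by linarith) (min_le_left _ _)⟩
  obtain ⟨C, hC⟩ := ((isCompact_Icc (a := T) (b := T + 1)).prod
    (isCompact_Icc (a := -r) (b := r))).exists_bound_of_continuousOn hh.continuousOn
  let G : ℝ → ℝ × ℝ → ℝ × ℝ := fun s p => (c p.2, h (e s) (c p.1))
  have hG : Continuous (fun p : ℝ × (ℝ × ℝ) => G p.1 p.2) := by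
    refine (hc.comp (by fun_prop)).prodMk ?_
    exact hh.comp ((he.comp (by fun_prop)).prodMk (hc.comp (by fun_prop)))
  obtain ⟨z, hz0, hz⟩ := peano_aux G hG (max r C).toNNReal (by
    intro s p
    refine le_trans ?_ (Real.le_coe_toNNReal _)
    rw [Prod.norm_def]
    refine max_le_max ?_ ?_
    · rw [Real.norm_eq_abs, abs_le]
      exact clamp_abs hr0.le _
    · exact hC (e s, c p.1) ⟨heI s, clamp_abs hr0.le _⟩) T (a, b)
  have hcont : ContinuousAt z T := (hz T ⟨le_rfl, by linarith⟩).continuousAt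
  have hev : ∀ᶠ t in 𝓝 T, (z t).1 ∈ Ioo (-r) r ∧ (z t).2 ∈ Ioo (-r) r := by
    have h1 : |a| < r := by have := le_max_left |a| |b|; linarith
    have h2 : |b| < r := by have := le_max_right |a| |b|; linarith
    refine (hcont.fst.eventually_mem ?_).and (hcont.snd.eventually_mem ?_)
    · rw [hz0]; exact Ioo_mem_nhds (abs_lt.1 h1).1 (abs_lt.1 h1).2
    · rw [hz0]; exact Ioo_mem_nhds (abs_lt.1 h2).1 (abs_lt.1 h2).2
  obtain ⟨η, hη, hball⟩ := Metric.eventually_nhds_iff.1 hev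
  have hcid : ∀ q ∈ Ioo (-r) r, c q = q := fun q hq => by
    simp only [c]; rw [min_eq_right hq.2.le, max_eq_right hq.1.le]
  refine ⟨min η 1, by positivity, fun t => (z t).1, fun t => (z t).2, by simp [hz0], by simp [hz0], ?_⟩
  intro t ht
  have hm1 := min_le_left η 1
  have hm2 := min_le_right η 1
  have htI : t ∈ Icc T (T + 1) := ⟨ht.1, by linarith [ht.2]⟩
  have hb := hball (y := t) (by
    rw [Real.dist_eq, abs_of_nonneg (by linarith [ht.1])]; linarith [ht.2])
  have hd := hz t htI
  have het : e t = t := by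
    simp only [e]; rw [min_eq_right htI.2, max_eq_right htI.1]
  simp only [G, hcid _ hb.1, hcid _ hb.2, het] at hd
  exact ⟨hd.fst, hd.snd⟩

theorem extend_sol_s5 (h : ℝ → ℝ → ℝ) (hh : Continuous (fun p : ℝ × ℝ => h p.1 p.2)) {t0 T R : ℝ}
    (ht : t0 < T) {x x' : ℝ → ℝ} (hx : ∀ t ∈ Ico t0 T, HasDerivAt x (x' t) t)
    (hx' : ∀ t ∈ Ico t0 T, HasDerivAt x' (h t (x t)) t)
    (hb : ∀ t ∈ Ico t0 T, |x t| ≤ R) (hb' : ∀ t ∈ Ico t0 T, |x' t| ≤ R) :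
    ∃ η > 0, ∃ y y' : ℝ → ℝ, (∀ t < T, y t = x t) ∧ ∀ t ∈ Ico t0 (T + η),
      HasDerivAt y (y' t) t ∧ HasDerivAt y' (h t (y t)) t := by
  obtain ⟨C, hC⟩ := ((isCompact_Icc (a := t0) (b := T)).prod
    (isCompact_Icc (a := -R) (b := R))).exists_bound_of_continuousOn hh.continuousOn
  obtain ⟨a, ha⟩ := lip_limit ht hx hb'
  obtain ⟨b, hb2⟩ := lip_limit ht hx' (R := C) (fun t htt =>
    hC (t, x t) ⟨⟨htt.1, htt.2.le⟩, abs_le.1 (hb t htt)⟩)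
  obtain ⟨η, hη, z, z', hza, hzb, hz⟩ := peano_second h hh T a b
  refine ⟨η, hη, fun t => if t < T then x t else z t, fun t => if t < T then x' t else z' t,
    fun t htt => if_pos htt, fun t htt => ⟨?_, ?_⟩⟩
  · exact glue_deriv_s5 ht hx (fun t ht => (hz t ht).1) (by rwa [hza]) (by rwa [hzb]) t htt
  · have := glue_deriv_s5 (dx := fun t => h t (x t)) (dz := fun t => h t (z t)) ht hx'
      (fun t ht => (hz t ht).2) (by rwa [hzb]) (by
        rw [hza]
        exact (hh.tendsto (T, a)).comp ((tendsto_id.mono_left nhdsWithin_le_nhds).prodMk_nhds ha))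
      t htt
    convert this using 1
    split_ifs with hlt <;> simp [hlt]
end Ext


section Lyap
open Topology

theorem int_nonneg_of_sign {k : ℝ → ℝ} (hk : Continuous k) (h : ∀ s, s ≠ 0 → 0 ≤ s * k s) (v : ℝ) :
    0 ≤ ∫ s in (0:ℝ)..v, k s := by
  rcases le_total 0 v with hv | hv
  · have := intervalIntegral.integral_mono_on_of_le_Ioo (μ := MeasureTheory.volume) (f := fun _ => (0:ℝ)) (g := k) hv
      intervalIntegrable_const (hk.intervalIntegrable _ _)
      (fun s hs => nonneg_of_mul_nonneg_right (h s hs.1.ne') hs.1)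
    simpa using this
  · rw [intervalIntegral.integral_symm]
    have := intervalIntegral.integral_mono_on_of_le_Ioo (μ := MeasureTheory.volume) (f := k) (g := fun _ => (0:ℝ)) hv
      (hk.intervalIntegrable _ _) intervalIntegrable_const
      (fun s hs => by nlinarith [h s hs.2.ne, hs.2])
    simpa using this

theorem cube_mono {t₀ : ℝ} {f ft : ℝ → ℝ → ℝ}
    (hft : ∀ v : ℝ, ∀ t ∈ Set.Ici t₀,
      HasDerivWithinAt (fun s => f s v) (ft t v) (Set.Ici t₀) t)
    (hsign' : ∀ t ∈ Set.Ici t₀, ∀ v : ℝ, v ≠ 0 → v * (3 * f t v + t * ft t v) ≤ 0)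
    {v : ℝ} (hv : v ≠ 0) : AntitoneOn (fun t => v * (t ^ 3 * f t v)) (Ici t₀) := by
  have hd : ∀ t ∈ Ici t₀, HasDerivWithinAt (fun t => v * (t ^ 3 * f t v))
      (t ^ 2 * (v * (3 * f t v + t * ft t v))) (Ici t₀) t := by
    intro t ht
    have h := (((hasDerivAt_pow 3 t).hasDerivWithinAt (s := Ici t₀)).mul (hft v t ht)).const_mul v
    refine h.congr_deriv ?_
    push_cast; ring
  refine antitoneOn_of_hasDerivWithinAt_nonpos (convex_Ici t₀)
    (f' := fun t => t ^ 2 * (v * (3 * f t v + t * ft t v)))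
    (fun t ht => (hd t ht).continuousWithinAt)
    (fun t ht => (hd t (interior_subset ht)).mono interior_subset) (fun t ht => ?_)
  exact mul_nonpos_of_nonneg_of_nonpos (by positivity) (hsign' t (interior_subset ht) v hv)

theorem lyap_bound {t₀ b : ℝ} (ht₀ : 1 ≤ t₀) (hb : t₀ ≤ b) {g : ℝ → ℝ → ℝ}
    (hg : Continuous (fun p : ℝ × ℝ => g p.1 p.2))
    (hsign : ∀ t ∈ Ici t₀, ∀ v : ℝ, v ≠ 0 → 0 ≤ v * g t v)
    (hmono : ∀ v : ℝ, v ≠ 0 → AntitoneOn (fun t => v * (t ^ 3 * g t v)) (Ici t₀))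
    {u v : ℝ → ℝ}
    (hu : ∀ t ∈ Icc t₀ b, HasDerivAt u (-t * g t (v t)) t)
    (hv : ∀ t ∈ Icc t₀ b, HasDerivAt v (u t / t ^ 2) t) :
    u b ^ 2 / 2 ≤ u t₀ ^ 2 / 2 + t₀ ^ 3 * ∫ s in (0:ℝ)..(v t₀), g t₀ s := by
  have hgt : ∀ t, Continuous (g t) := fun t => hg.comp (continuous_const.prodMk continuous_id)
  set F : ℝ → ℝ → ℝ := fun t w => ∫ s in (0:ℝ)..w, g t s with hF
  have hFc : Continuous (fun p : ℝ × ℝ => F p.1 p.2) := by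
    have := intervalIntegral.continuous_parametric_intervalIntegral_of_continuous
      (μ := MeasureTheory.volume) (f := fun (p : ℝ × ℝ) s => g p.1 s) (a₀ := 0)
      (hg.comp ((continuous_fst.comp continuous_fst).prodMk continuous_snd))
      (s := fun p : ℝ × ℝ => p.2) continuous_snd
    exact this
  have hFm : ∀ w, ∀ t1 t2, t₀ ≤ t1 → t1 ≤ t2 → t2 ^ 3 * F t2 w ≤ t1 ^ 3 * F t1 w := by
    intro w t1 t2 h1 h2
    have := int_nonneg_of_sign (k := fun s => t1 ^ 3 * g t1 s - t2 ^ 3 * g t2 s)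
      ((continuous_const.mul (hgt _)).sub (continuous_const.mul (hgt _)))
      (fun s hs => by
        have := hmono s hs (show t1 ∈ Ici t₀ from h1) (show t2 ∈ Ici t₀ from h1.trans h2) h2
        simp only at this
        linarith) w
    have hi : ∀ t, IntervalIntegrable (fun s => t ^ 3 * g t s) MeasureTheory.volume 0 w :=
      fun t => (continuous_const.mul (hgt t)).intervalIntegrable _ _
    rw [intervalIntegral.integral_sub (hi t1) (hi t2),
      intervalIntegral.integral_const_mul, intervalIntegral.integral_const_mul] at this
    simp only [hF]; linarith
  have hF0 : 0 ≤ F b (v b) := int_nonneg_of_sign (hgt b) (hsign b hb) _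
  have key := image_le_of_liminf_slope_right_le_deriv_boundary
    (f := fun t => u t ^ 2 / 2 + t ^ 3 * F t (v t)) (a := t₀) (b := b)
    (B := fun _ => u t₀ ^ 2 / 2 + t₀ ^ 3 * F t₀ (v t₀)) (B' := fun _ => 0)
    (by
      have huc : ContinuousOn u (Icc t₀ b) := fun t ht => (hu t ht).continuousAt.continuousWithinAt
      have hvc : ContinuousOn v (Icc t₀ b) := fun t ht => (hv t ht).continuousAt.continuousWithinAt
      have : ContinuousOn (fun t => F t (v t)) (Icc t₀ b) :=
        hFc.comp_continuousOn (continuousOn_id.prodMk hvc)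
      fun_prop)
    le_rfl continuousOn_const (fun t _ => (hasDerivAt_const t _).hasDerivWithinAt)
    (by
      intro t ht r hr
      apply Eventually.frequently
      have htI : t ∈ Icc t₀ b := ⟨ht.1, ht.2.le⟩
      have ht0 : t ≠ 0 := by linarith [ht.1]
      have hW : HasDerivAt (fun s => u s ^ 2 / 2 + t ^ 3 * F t (v s)) 0 t := by
        have h1 : HasDerivAt (F t) (g t (v t)) (v t) :=
          intervalIntegral.integral_hasDerivAt_right ((hgt t).intervalIntegrable _ _)
            ((hgt t).stronglyMeasurableAtFilter _ _) (hgt t).continuousAt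
        have h2 := (((hu t htI).pow 2).div_const 2).add
          ((h1.comp t (hv t htI)).const_mul (t ^ 3))
        refine h2.congr_deriv ?_
        field_simp
        ring
      have hs := (hasDerivAt_iff_tendsto_slope.1 hW).mono_left
        (nhdsWithin_mono t (fun s (hs : s ∈ Ioi t) => (ne_of_gt hs : s ≠ t)))
      filter_upwards [hs.eventually_lt_const hr, self_mem_nhdsWithin] with s h1 h2
      refine lt_of_le_of_lt ?_ h1
      have h2' : t < s := h2
      rw [slope_def_field, slope_def_field]
      have := hFm (v s) t s ht.1 h2'.le
      have h3 : 0 < s - t := by linarith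
      gcongr)
    (x := b) ⟨hb, le_rfl⟩
  have : 0 ≤ b ^ 3 * F b (v b) := mul_nonneg (by have : 0 ≤ b := by linarith
                                                 positivity) hF0
  linarith

theorem v_bounds {D : Set ℝ} (hD : Convex ℝ D) {t₀ C : ℝ} (ht₀ : 1 ≤ t₀) (hD1 : D ⊆ Ici t₀)
    {u v : ℝ → ℝ} (hv : ∀ t ∈ D, HasDerivAt v (u t / t ^ 2) t) (hu : ∀ t ∈ D, |u t| ≤ C) :
    AntitoneOn (fun t => v t + C * t⁻¹) D ∧ MonotoneOn (fun t => v t - C * t⁻¹) D := by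
  have hpos : ∀ t ∈ D, 0 < t := fun t ht => by have : t₀ ≤ t := hD1 ht; linarith
  have hi : ∀ t ∈ D, HasDerivAt (fun t : ℝ => C * t⁻¹) (C * (-(t ^ 2)⁻¹)) t := fun t ht =>
    (hasDerivAt_inv (hpos t ht).ne').const_mul C
  constructor
  · refine antitoneOn_of_hasDerivWithinAt_nonpos hD (f' := fun t => u t / t ^ 2 + C * (-(t ^ 2)⁻¹))
      (fun t ht => ((hv t ht).add (hi t ht)).continuousAt.continuousWithinAt)
      (fun t ht => ((hv t (interior_subset ht)).add (hi t (interior_subset ht))).hasDerivWithinAt)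
      (fun t ht => ?_)
    have h1 := hpos t (interior_subset ht)
    have h2 := (abs_le.1 (hu t (interior_subset ht))).2
    have : u t / t ^ 2 + C * (-(t ^ 2)⁻¹) = (u t - C) * (t ^ 2)⁻¹ := by ring
    rw [this]
    exact mul_nonpos_of_nonpos_of_nonneg (by linarith) (by positivity)
  · refine monotoneOn_of_hasDerivWithinAt_nonneg hD (f' := fun t => u t / t ^ 2 - C * (-(t ^ 2)⁻¹))
      (fun t ht => ((hv t ht).sub (hi t ht)).continuousAt.continuousWithinAt)
      (fun t ht => ((hv t (interior_subset ht)).sub (hi t (interior_subset ht))).hasDerivWithinAt)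
      (fun t ht => ?_)
    have h1 := hpos t (interior_subset ht)
    have h2 := (abs_le.1 (hu t (interior_subset ht))).1
    have : u t / t ^ 2 - C * (-(t ^ 2)⁻¹) = (u t + C) * (t ^ 2)⁻¹ := by ring
    rw [this]
    exact mul_nonneg (by linarith) (by positivity)

theorem anti_lim {u : ℝ → ℝ} {N c : ℝ} (h : AntitoneOn u (Ici N)) (hc : ∀ t ∈ Ici N, c ≤ u t) :
    ∃ l, Tendsto u atTop (𝓝 l) := by
  have ha : Antitone (fun t => u (max N t)) := fun a b hab =>
    h (mem_Ici.2 (le_max_left _ _)) (mem_Ici.2 (le_max_left _ _)) (max_le_max le_rfl hab)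
  refine ⟨_, (tendsto_atTop_ciInf ha ⟨c, ?_⟩).congr' ?_⟩
  · rintro _ ⟨t, rfl⟩; exact hc _ (mem_Ici.2 (le_max_left _ _))
  · filter_upwards [eventually_ge_atTop N] with t ht
    rw [max_eq_right ht]

theorem final_asymp {t₀ C : ℝ} (ht₀ : 1 ≤ t₀) {g : ℝ → ℝ → ℝ}
    (hsign : ∀ t ∈ Ici t₀, ∀ v : ℝ, v ≠ 0 → 0 ≤ v * g t v)
    {u v : ℝ → ℝ}
    (hu : ∀ t ∈ Ici t₀, HasDerivAt u (-t * g t (v t)) t)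
    (hv : ∀ t ∈ Ici t₀, HasDerivAt v (u t / t ^ 2) t) (hub : ∀ t ∈ Ici t₀, |u t| ≤ C) :
    Tendsto v atTop (𝓝 0) ∨
      ∃ x₁ x₂ : ℝ, x₁ ≠ 0 ∧ Tendsto (fun t => t * v t - (x₁ * t + x₂)) atTop (𝓝 0) := by
  obtain ⟨h1, h2⟩ := v_bounds (convex_Ici t₀) ht₀ subset_rfl hv hub
  have hC : 0 ≤ C := (abs_nonneg _).trans (hub t₀ self_mem_Ici)
  obtain ⟨ℓ, hℓ⟩ := anti_lim h1 (c := v t₀ - C * t₀⁻¹) (fun t ht => by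
    have := h2 self_mem_Ici ht ht
    simp only at this
    have h3 : t₀ ≤ t := ht
    have : 0 ≤ C * t⁻¹ := mul_nonneg hC (inv_nonneg.2 (by linarith))
    linarith)
  have hvl : Tendsto v atTop (𝓝 ℓ) := by
    have := hℓ.sub ((tendsto_inv_atTop_zero (𝕜 := ℝ)).const_mul C)
    simpa using this
  by_cases hl0 : ℓ = 0
  · left; rwa [hl0] at hvl
  right
  have hU : ∃ U, Tendsto u atTop (𝓝 U) := by
    rcases lt_or_gt_of_ne hl0 with hl | hl
    · obtain ⟨N, hN⟩ := eventually_atTop.1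
        ((hvl.eventually_lt_const hl).and (eventually_ge_atTop t₀))
      obtain ⟨l, hl⟩ := anti_lim (u := fun t => - u t) (N := N) (c := -C) (by
        refine antitoneOn_of_hasDerivWithinAt_nonpos (convex_Ici N)
          (f' := fun t => -(-t * g t (v t)))
          (fun t ht => (hu t (hN t ht).2).neg.continuousAt.continuousWithinAt)
          (fun t ht => (hu t (hN t (interior_subset ht)).2).neg.hasDerivWithinAt)
          (fun t ht => ?_)
        obtain ⟨h3, h4⟩ := hN t (interior_subset ht)
        have := hsign t h4 (v t) h3.ne
        have h5 : g t (v t) ≤ 0 := by nlinarith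
        have h6 : 0 < t := by linarith
        nlinarith) (fun t ht => by linarith [(abs_le.1 (hub t (hN t ht).2)).2])
      exact ⟨-l, by simpa using hl.neg⟩
    · obtain ⟨N, hN⟩ := eventually_atTop.1
        ((hvl.eventually_const_lt hl).and (eventually_ge_atTop t₀))
      exact anti_lim (u := u) (N := N) (c := -C) (by
        refine antitoneOn_of_hasDerivWithinAt_nonpos (convex_Ici N)
          (f' := fun t => (-t * g t (v t)))
          (fun t ht => (hu t (hN t ht).2).continuousAt.continuousWithinAt)
          (fun t ht => (hu t (hN t (interior_subset ht)).2).hasDerivWithinAt)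
          (fun t ht => ?_)
        obtain ⟨h3, h4⟩ := hN t (interior_subset ht)
        have := hsign t h4 (v t) h3.ne'
        have h5 : 0 ≤ g t (v t) := by
          exact nonneg_of_mul_nonneg_right this h3
        have h6 : 0 < t := by linarith
        nlinarith) (fun t ht => (abs_le.1 (hub t (hN t ht).2)).1)
  obtain ⟨U, hU⟩ := hU
  refine ⟨ℓ, -U, hl0, ?_⟩
  have hpos : ∀ᶠ t : ℝ in atTop, 0 < t := eventually_gt_atTop 0
  have hlh := HasDerivAt.lhopital_zero_atTop (f := fun t => v t - ℓ) (g := fun t : ℝ => t⁻¹)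
    (f' := fun t => u t / t ^ 2) (g' := fun t => -(t ^ 2)⁻¹) (l := 𝓝 (-U))
    (by filter_upwards [eventually_ge_atTop t₀] with t ht using (hv t ht).sub_const ℓ)
    (by filter_upwards [hpos] with t ht using hasDerivAt_inv ht.ne')
    (by filter_upwards [hpos] with t ht
        have : 0 < (t ^ 2)⁻¹ := by positivity
        linarith)
    (by simpa using hvl.sub_const ℓ) tendsto_inv_atTop_zero
    (by
      refine hU.neg.congr' ?_
      filter_upwards [hpos] with t ht
      field_simp)
  have := hlh.sub_const (-U)
  rw [sub_self] at this
  refine this.congr' ?_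
  filter_upwards [hpos] with t ht
  field_simp
  ring

end Lyap

/-- Theorem 2: consider `x″ + f(t, x/t) = 0`, `t ≥ t₀ ≥ 1`, with `f` continuous,
`∂f/∂t` continuous, and `v·f(t,v) ≥ 0`, `v·[3f(t,v) + t·∂f/∂t(t,v)] ≤ 0` for all
`t ≥ t₀` and `v ≠ 0`.  Then every (maximal, i.e. non-extendable) solution `x` on
`[t₀, T∞)` is defined on all of `[t₀, ∞)` (i.e. `T∞ = ⊤`) and satisfies either
`x(t) = o(t)` or `x(t) = x₁t + x₂ + o(1)` with `x₁ ≠ 0`, as `t → +∞`. -/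
theorem asymptotically_linear_solutions_via_Lyapunov_second
    (t₀ : ℝ) (ht₀ : 1 ≤ t₀) (f ft : ℝ → ℝ → ℝ)
    (hf_cont : ContinuousOn (fun p : ℝ × ℝ => f p.1 p.2) (Set.Ici t₀ ×ˢ Set.univ))
    (hft : ∀ v : ℝ, ∀ t ∈ Set.Ici t₀,
      HasDerivWithinAt (fun s => f s v) (ft t v) (Set.Ici t₀) t)
    (hft_cont : ContinuousOn (fun p : ℝ × ℝ => ft p.1 p.2) (Set.Ici t₀ ×ˢ Set.univ))
    (hsign : ∀ t ∈ Set.Ici t₀, ∀ v : ℝ, v ≠ 0 → 0 ≤ v * f t v)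
    (hsign' : ∀ t ∈ Set.Ici t₀, ∀ v : ℝ, v ≠ 0 → v * (3 * f t v + t * ft t v) ≤ 0)
    (Tinf : EReal) (hT : (t₀ : EReal) < Tinf)
    (x x' x'' : ℝ → ℝ)
    (hx : ∀ t : ℝ, t₀ ≤ t → (t : EReal) < Tinf → HasDerivAt x (x' t) t)
    (hx' : ∀ t : ℝ, t₀ ≤ t → (t : EReal) < Tinf → HasDerivAt x' (x'' t) t)
    (heq : ∀ t : ℝ, t₀ ≤ t → (t : EReal) < Tinf → x'' t + f t (x t / t) = 0)
    (hmax : ∀ (y y' y'' : ℝ → ℝ) (T' : EReal), Tinf < T' →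
      (∀ t : ℝ, t₀ ≤ t → (t : EReal) < T' → HasDerivAt y (y' t) t) →
      (∀ t : ℝ, t₀ ≤ t → (t : EReal) < T' → HasDerivAt y' (y'' t) t) →
      (∀ t : ℝ, t₀ ≤ t → (t : EReal) < T' → y'' t + f t (y t / t) = 0) →
      ¬ (∀ t : ℝ, t₀ ≤ t → (t : EReal) < Tinf → y t = x t)) :
    Tinf = ⊤ ∧
      ((fun t => x t) =o[atTop] (fun t : ℝ => t) ∨
        ∃ x₁ x₂ : ℝ, x₁ ≠ 0 ∧
          Tendsto (fun t => x t - (x₁ * t + x₂)) atTop (nhds 0)) := by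
  have hf0 : ContinuousOn (fun p : ℝ × ℝ => f p.1 p.2) (Set.Ici t₀ ×ˢ Set.univ) := hf_cont
  set g : ℝ → ℝ → ℝ := fun t v => f (max t t₀) v with hgdef
  have hgf : ∀ t, t₀ ≤ t → ∀ v, g t v = f t v := fun t ht v => by
    simp only [hgdef]; rw [max_eq_left ht]
  have hg : Continuous (fun p : ℝ × ℝ => g p.1 p.2) := by
    refine hf0.comp_continuous (f := fun p : ℝ × ℝ => (max p.1 t₀, p.2)) (by fun_prop) ?_
    intro p
    exact ⟨mem_Ici.2 (le_max_right _ _), trivial⟩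
  have hgs : ∀ t ∈ Ici t₀, ∀ v : ℝ, v ≠ 0 → 0 ≤ v * g t v := fun t ht v hv => by
    rw [hgf t ht]; exact hsign t ht v hv
  have hgm : ∀ v : ℝ, v ≠ 0 → AntitoneOn (fun t => v * (t ^ 3 * g t v)) (Ici t₀) := by
    intro v hv
    refine (cube_mono hft hsign' hv).congr (fun t ht => ?_)
    simp only
    rw [hgf t ht]
  set u : ℝ → ℝ := fun t => t * x' t - x t with hudef
  set v : ℝ → ℝ := fun t => x t / t with hvdef
  have hu : ∀ t : ℝ, t₀ ≤ t → (t : EReal) < Tinf → HasDerivAt u (-t * g t (v t)) t := by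
    intro t h1 h2
    have h := ((hasDerivAt_id t).mul (hx' t h1 h2)).sub (hx t h1 h2)
    refine h.congr_deriv ?_
    rw [hgf t h1]
    have h3 : x'' t = - f t (x t / t) := by linarith [heq t h1 h2]
    rw [h3]
    simp only [hvdef, id]
    ring
  have hv : ∀ t : ℝ, t₀ ≤ t → (t : EReal) < Tinf → HasDerivAt v (u t / t ^ 2) t := by
    intro t h1 h2
    have ht0 : t ≠ 0 := by linarith
    have h := (hx t h1 h2).div (hasDerivAt_id t) ht0
    refine h.congr_deriv ?_
    simp only [hudef, id]
    ring
  set E0 : ℝ := u t₀ ^ 2 / 2 + t₀ ^ 3 * ∫ s in (0:ℝ)..(v t₀), g t₀ s with hE0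
  set C : ℝ := Real.sqrt (2 * E0) with hCdef
  have hub : ∀ t : ℝ, t₀ ≤ t → (t : EReal) < Tinf → |u t| ≤ C := by
    intro t h1 h2
    have hlt : ∀ s ∈ Icc t₀ t, (s : EReal) < Tinf := fun s hs =>
      lt_of_le_of_lt (EReal.coe_le_coe_iff.2 hs.2) h2
    have := lyap_bound ht₀ h1 hg hgs hgm (u := u) (v := v)
      (fun s hs => hu s hs.1 (hlt s hs)) (fun s hs => hv s hs.1 (hlt s hs))
    exact Real.abs_le_sqrt (by linarith)
  have hC0 : 0 ≤ C := Real.sqrt_nonneg _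
  have htop : Tinf = ⊤ := by
    by_contra hne
    obtain ⟨T, rfl⟩ : ∃ T : ℝ, (T : EReal) = Tinf := by
      refine ⟨Tinf.toReal, EReal.coe_toReal hne ?_⟩
      rintro rfl
      exact not_lt_bot hT
    simp only [EReal.coe_lt_coe_iff] at hT hx hx' heq hu hv hub
    obtain ⟨ha, hm⟩ := v_bounds (D := Ico t₀ T) (convex_Ico _ _) ht₀ (fun t ht => ht.1)
      (fun t ht => hv t ht.1 ht.2) (fun t ht => hub t ht.1 ht.2)
    have hT0 : 0 < T := by linarith
    set B : ℝ := |v t₀| + C * t₀⁻¹ with hB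
    have hvb : ∀ t ∈ Ico t₀ T, |v t| ≤ B := by
      intro t ht
      have h1 := ha ⟨le_rfl, hT⟩ ht ht.1
      have h2 := hm ⟨le_rfl, hT⟩ ht ht.1
      simp only at h1 h2
      have h3 : 0 ≤ C * t⁻¹ := mul_nonneg hC0 (inv_nonneg.2 (by linarith [ht.1]))
      have h4 := le_abs_self (v t₀)
      have h5 := neg_abs_le (v t₀)
      rw [abs_le]
      constructor <;> linarith
    have hB0 : 0 ≤ B := (abs_nonneg _).trans (hvb t₀ ⟨le_rfl, hT⟩)
    have hxv : ∀ t ∈ Ico t₀ T, |x t| ≤ T * B := by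
      intro t ht
      have htp : 0 < t := by linarith [ht.1]
      have : x t = t * v t := by simp only [hvdef]; field_simp
      rw [this, abs_mul, abs_of_pos htp]
      exact mul_le_mul ht.2.le (hvb t ht) (abs_nonneg _) hT0.le
    have hxb : ∀ t ∈ Ico t₀ T, |x' t| ≤ C + T * B := by
      intro t ht
      have ht1 : 1 ≤ t := by linarith [ht.1]
      have h1 : t * x' t = u t + x t := by simp only [hudef]; ring
      have h2 : |t * x' t| ≤ C + T * B := by
        rw [h1]
        exact (abs_add_le _ _).trans (add_le_add (hub t ht.1 ht.2) (hxv t ht))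
      rw [abs_mul, abs_of_pos (by linarith)] at h2
      nlinarith [abs_nonneg (x' t)]
    let h : ℝ → ℝ → ℝ := fun t p => - g t (p / max t t₀)
    have hhc : Continuous (fun p : ℝ × ℝ => h p.1 p.2) := by
      refine (hg.comp (continuous_fst.prodMk (continuous_snd.div (by fun_prop) ?_))).neg
      intro p
      have := le_max_right p.1 t₀
      linarith
    have hh : ∀ t, t₀ ≤ t → ∀ p, h t p = - f t (p / t) := fun t ht p => by
      simp only [h]; rw [hgf t ht, max_eq_left ht]
    obtain ⟨η, hη, y, y', hyx, hy⟩ := extend_sol_s5 h hhc hT (x := x) (x' := x') (R := C + T * B)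
      (fun t ht => hx t ht.1 ht.2)
      (fun t ht => by
        rw [hh t ht.1]
        refine (hx' t ht.1 ht.2).congr_deriv ?_
        linarith [heq t ht.1 ht.2])
      (fun t ht => (hxv t ht).trans (by linarith)) hxb
    refine hmax y y' (fun t => h t (y t)) ((T + η : ℝ) : EReal)
      (EReal.coe_lt_coe_iff.2 (by linarith)) ?_ ?_ ?_ ?_
    · intro t h1 h2
      exact (hy t ⟨h1, EReal.coe_lt_coe_iff.1 h2⟩).1
    · intro t h1 h2
      exact (hy t ⟨h1, EReal.coe_lt_coe_iff.1 h2⟩).2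
    · intro t h1 h2
      rw [hh t h1]; ring
    · intro t h1 h2
      exact hyx t (EReal.coe_lt_coe_iff.1 h2)
  refine ⟨htop, ?_⟩
  have hlt : ∀ t : ℝ, (t : EReal) < Tinf := fun t => by rw [htop]; exact EReal.coe_lt_top t
  rcases final_asymp ht₀ hgs (u := u) (v := v) (C := C) (fun t ht => hu t ht (hlt t))
    (fun t ht => hv t ht (hlt t)) (fun t ht => hub t ht (hlt t)) with h0 | ⟨x₁, x₂, hne, hlim⟩
  · left
    rw [isLittleO_iff_tendsto']
    · exact h0
    · filter_upwards [eventually_gt_atTop (0:ℝ)] with t ht h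
      exact absurd h ht.ne'
  · right
    refine ⟨x₁, x₂, hne, hlim.congr' ?_⟩
    filter_upwards [eventually_gt_atTop (0:ℝ)] with t ht
    simp only [hvdef]
    field_simp
end

section
/- Let n ≥ 1 be an integer and consider the Emden–Fowler type equation x″ + A(t)x^{2n−1} = 0 for t ≥ t₀ ≥ 1, where A : [t₀,∞) → ℝ is continuous with A(t) ≤ 0 for all t ≥ t₀ and ∫_{t₀}^{∞} s^{2n}|A(s)| ds < +∞. Then every solution x whose initial data u₀ = t₀x′(t₀) − x(t₀), v₀ = x(t₀)/t₀ satisfy (4/t₀)·(1 + u₀²/2 + ∫_{t₀}^{∞} t^{2n}|A(t)| dt) ≤ (1/(2n))·(1+|v₀|)^{−2n} is defined on all of [t₀,∞) and satisfies either x(t) = o(t) as t → +∞, or x(t) = x₁t + x₂ + o(1) with x₁ ≠ 0 as t → +∞. -/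
open Filter Set Asymptotics MeasureTheory


lemma ef_lip (m : ℕ) (c C R : ℝ) (hc : |c| ≤ C) (hR : 0 ≤ R) :
    LipschitzOnWith (Real.toNNReal (1 + C * m * R ^ (m-1)))
      (fun p : ℝ × ℝ => ((p.2, -(c * p.1 ^ m)) : ℝ × ℝ)) (Metric.closedBall 0 R) := by
  have hC : 0 ≤ C := (abs_nonneg c).trans hc
  apply LipschitzOnWith.of_dist_le_mul
  intro p hp q hq
  have hK : 0 ≤ C * m * R ^ (m-1) := by positivity
  rw [Real.coe_toNNReal _ (by linarith)]
  rw [mem_closedBall_zero_iff, Prod.norm_def, max_le_iff, Real.norm_eq_abs, Real.norm_eq_abs] at hp hq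
  have hd1 : |p.1 - q.1| ≤ dist p q := by
    rw [Prod.dist_eq, Real.dist_eq]; exact le_max_left _ _
  have hd2 : |p.2 - q.2| ≤ dist p q := by
    rw [Prod.dist_eq, Real.dist_eq, Real.dist_eq]; exact le_max_right _ _
  have hd : 0 ≤ dist p q := dist_nonneg
  rw [Prod.dist_eq, max_le_iff, Real.dist_eq, Real.dist_eq]
  constructor
  · nlinarith
  · have h1 := abs_pow_sub_pow_le p.1 q.1 m
    have h2 : max |p.1| |q.1| ^ (m-1) ≤ R ^ (m-1) :=
      pow_le_pow_left₀ (le_max_of_le_left (abs_nonneg _)) (max_le hp.1 hq.1) _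
    have : -(c * p.1 ^ m) - -(c * q.1 ^ m) = -(c * (p.1 ^ m - q.1 ^ m)) := by ring
    simp only [this, abs_neg, abs_mul]
    calc |c| * |p.1 ^ m - q.1 ^ m| ≤ C * (dist p q * m * R ^ (m-1)) := by
          gcongr
          exact h1.trans (by gcongr)
      _ ≤ _ := by nlinarith

/-- Continuation of bounded solutions. -/
lemma ef_extend (m : ℕ) (a T R : ℝ) (haT : a < T) (A x x' : ℝ → ℝ)
    (hA : ContinuousOn A (Ici a)) (hR : 0 ≤ R)
    (hx : ∀ t, a ≤ t → t < T → HasDerivAt x (x' t) t)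
    (hx' : ∀ t, a ≤ t → t < T → HasDerivAt x' (-(A t * x t ^ m)) t)
    (hb : ∀ t, a ≤ t → t < T → |x t| ≤ R) (hb' : ∀ t, a ≤ t → t < T → |x' t| ≤ R) :
    ∃ (T' : ℝ) (y y' : ℝ → ℝ), T < T' ∧
      (∀ t, a ≤ t → t < T' → HasDerivAt y (y' t) t) ∧
      (∀ t, a ≤ t → t < T' → HasDerivAt y' (-(A t * y t ^ m)) t) ∧
      (∀ t, a ≤ t → t < T → y t = x t) := by
  obtain ⟨C, hC⟩ := (isCompact_Icc (a := a) (b := T + 1)).exists_bound_of_continuousOn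
    (hA.mono Icc_subset_Ici_self)
  have hC0 : 0 ≤ C := (norm_nonneg _).trans (hC a ⟨le_rfl, by linarith⟩)
  let f : ℝ → ℝ × ℝ → ℝ × ℝ := fun t p => (p.2, -(A t * p.1 ^ m))
  have hlip : ∀ S, 0 ≤ S → ∀ t ∈ Icc a (T+1), LipschitzOnWith
      (Real.toNNReal (1 + C * m * S ^ (m-1))) (f t) (Metric.closedBall 0 S) := by
    intro S hS t ht
    exact ef_lip m (A t) C S (hC t ht) hS
  set L : ℝ := (R + 1) + C * (R+1) ^ m with hL
  have hL1 : 1 ≤ L := by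
    have : 0 ≤ C * (R+1) ^ m := by positivity
    linarith
  have hL0 : 0 < L := by linarith
  -- starting point
  obtain ⟨t₁, h1a, h1T, h1L⟩ : ∃ t₁, a ≤ t₁ ∧ t₁ < T ∧ T - t₁ < 1 / L := by
    refine ⟨max a (T - 1 / (2 * L)), le_max_left _ _, max_lt haT ?_, ?_⟩
    · have : 0 < 1 / (2 * L) := by positivity
      linarith
    · have h2 : 1 / (2 * L) < 1 / L := by
        apply one_div_lt_one_div_of_lt hL0; linarith
      have := le_max_right a (T - 1 / (2 * L))
      linarith
  set t₂ := t₁ + 1 / L with ht₂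
  have h12 : t₁ < t₂ := by have : 0 < 1 / L := by positivity
                           linarith
  have h2T : T < t₂ := by linarith
  have h2T1 : t₂ ≤ T + 1 := by
    have : 1 / L ≤ 1 := by rw [div_le_one hL0]; exact hL1
    linarith
  have hsub : Icc t₁ t₂ ⊆ Icc a (T+1) := Icc_subset_Icc h1a h2T1
  let z : ℝ → ℝ × ℝ := fun t => (x t, x' t)
  have hzR : ∀ t, a ≤ t → t < T → z t ∈ Metric.closedBall 0 R := by
    intro t h1 h2
    rw [mem_closedBall_zero_iff, Prod.norm_def]
    exact max_le (hb t h1 h2) (hb' t h1 h2)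
  have hzd : ∀ t, a ≤ t → t < T → HasDerivAt z (f t (z t)) t := by
    intro t h1 h2
    exact (hx t h1 h2).prodMk (hx' t h1 h2)
  have hball : Metric.closedBall (z t₁) 1 ⊆ Metric.closedBall 0 (R + 1) := by
    apply Metric.closedBall_subset_closedBall'
    have := hzR t₁ h1a h1T
    rw [Metric.mem_closedBall] at this
    linarith
  have hPL : IsPicardLindelof f (⟨t₁, le_rfl, h12.le⟩ : Icc t₁ t₂) (z t₁) 1 0
      (Real.toNNReal L) (Real.toNNReal (1 + C * m * (R+1) ^ (m-1))) := by
    refine ⟨?_, ?_, ?_, ?_⟩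
    · intro t ht
      exact (hlip (R+1) (by linarith) t (hsub ht)).mono (by simpa using hball)
    · intro p hp
      have : ContinuousOn A (Icc t₁ t₂) := hA.mono fun t ht => h1a.trans ht.1
      exact continuousOn_const.prodMk (this.mul continuousOn_const).neg
    · intro t ht p hp
      have hp' := hball (by simpa using hp)
      rw [mem_closedBall_zero_iff, Prod.norm_def, max_le_iff, Real.norm_eq_abs, Real.norm_eq_abs] at hp'
      rw [Real.coe_toNNReal _ hL0.le, Prod.norm_def, max_le_iff]
      constructor
      · have : 0 ≤ C * (R+1) ^ m := by positivity
        simp only [f, Real.norm_eq_abs]; linarith [hp'.2]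
      · simp only [f, Real.norm_eq_abs, abs_neg, abs_mul, abs_pow]
        have hh := hC t (hsub ht)
        rw [Real.norm_eq_abs] at hh
        have : |A t| * |p.1| ^ m ≤ C * (R+1) ^ m := by
          gcongr; exact hp'.1
        linarith
    · rw [Real.coe_toNNReal _ hL0.le]
      simp only [sub_self, ht₂, add_sub_cancel_left]
      rw [max_eq_left (by positivity)]
      simp [hL0.ne']
  obtain ⟨α, hα0, hα⟩ := hPL.exists_eq_forall_mem_Icc_hasDerivWithinAt₀
  simp only at hα0
  have hαc : ContinuousOn α (Icc t₁ t₂) := fun t ht => (hα t ht).continuousWithinAt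
  obtain ⟨S, hS⟩ := isCompact_Icc.exists_bound_of_continuousOn hαc
  have hS0 : 0 ≤ S := (norm_nonneg _).trans (hS t₁ ⟨le_rfl, h12.le⟩)
  have hαd : ∀ t, t₁ < t → t < t₂ → HasDerivAt α (f t (α t)) t := fun t h1 h2 =>
    (hα t ⟨h1.le, h2.le⟩).hasDerivAt (Icc_mem_nhds h1 h2)
  have heq : ∀ t, t₁ ≤ t → t < T → z t = α t := by
    intro t h1 h2
    refine ODE_solution_unique_of_mem_Icc_right (v := f) (f := z) (g := α) (a := t₁) (b := t)
      (s := fun _ => Metric.closedBall 0 (max R S))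
      (K := (Real.toNNReal (1 + C * m * (max R S) ^ (m-1)))) ?_ ?_ ?_ ?_ ?_ ?_ ?_ hα0.symm ⟨h1, le_rfl⟩
    · intro s hs
      exact hlip _ (le_max_of_le_left hR) s ⟨h1a.trans hs.1, by linarith [hs.2]⟩
    · intro s hs
      exact (hzd s (h1a.trans hs.1) (by linarith [hs.2])).continuousAt.continuousWithinAt
    · intro s hs
      exact (hzd s (h1a.trans hs.1) (by linarith [hs.2])).hasDerivWithinAt
    · intro s hs
      exact Metric.closedBall_subset_closedBall (le_max_left _ _)
        (hzR s (h1a.trans hs.1) (by linarith [hs.2]))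
    · exact hαc.mono (Icc_subset_Icc le_rfl (by linarith))
    · intro s hs
      refine (hα s ⟨hs.1, by linarith [hs.2]⟩).mono_of_mem_nhdsWithin ?_
      exact Icc_mem_nhdsGE_of_mem ⟨hs.1, by linarith [hs.2]⟩
    · intro s hs
      rw [mem_closedBall_zero_iff]
      exact (hS s ⟨hs.1, by linarith [hs.2]⟩).trans (le_max_right _ _)
  let w : ℝ → ℝ × ℝ := fun t => if t < T then z t else α t
  have hwz : ∀ t, t < T → w t = z t := fun t h => by simp [w, h]
  have hwα : ∀ t, t₁ < t → w t = α t := fun t h => by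
    by_cases hh : t < T
    · simp only [w, hh, if_true]; exact heq t h.le hh
    · simp [w, hh]
  have hwd : ∀ t, a ≤ t → t < t₂ → HasDerivAt w (f t (w t)) t := by
    intro t h1 h2
    by_cases hh : t < T
    · rw [hwz t hh]
      apply (hzd t h1 hh).congr_of_eventuallyEq
      filter_upwards [Iio_mem_nhds hh] with s hs using hwz s hs
    · have h3 : t₁ < t := by linarith
      rw [hwα t h3]
      apply (hαd t h3 h2).congr_of_eventuallyEq
      filter_upwards [Ioi_mem_nhds h3] with s hs using hwα s hs
  refine ⟨t₂, fun t => (w t).1, fun t => (w t).2, h2T, ?_, ?_, ?_⟩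
  · intro t h1 h2
    exact (hwd t h1 h2).fst
  · intro t h1 h2
    exact (hwd t h1 h2).snd
  · intro t h1 h2
    simp only [hwz t h2]; rfl

/-- A priori estimate. -/
lemma ef_apriori (m : ℕ) (t₀ b M I : ℝ) (ht₀ : 1 ≤ t₀) (hb : t₀ ≤ b) (B u v : ℝ → ℝ)
    (hBc : ContinuousOn B (Ici t₀)) (hB0 : ∀ t ∈ Ici t₀, 0 ≤ B t)
    (hBi : IntegrableOn B (Ici t₀)) (hI : I = ∫ t in Ici t₀, B t)
    (hv : ∀ t ∈ Icc t₀ b, HasDerivAt v (u t / t ^ 2) t)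
    (hu : ∀ t ∈ Icc t₀ b, HasDerivAt u (B t * v t ^ m) t)
    (hM : ∀ t ∈ Icc t₀ b, |v t| ≤ M) :
    |u b| ≤ |u t₀| + M ^ m * I := by
  have hM0 : 0 ≤ M := (abs_nonneg _).trans (hM t₀ ⟨le_rfl, hb⟩)
  have hBc' : ContinuousOn B (Icc t₀ b) := hBc.mono Icc_subset_Ici_self
  have hvc : ContinuousOn v (Icc t₀ b) := fun t ht => (hv t ht).continuousAt.continuousWithinAt
  have hint : IntervalIntegrable (fun t => B t * v t ^ m) volume t₀ b := by
    apply ContinuousOn.intervalIntegrable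
    rw [uIcc_of_le hb]
    exact hBc'.mul (hvc.pow m)
  have hintB : IntervalIntegrable (fun t => M ^ m * B t) volume t₀ b := by
    apply ContinuousOn.intervalIntegrable
    rw [uIcc_of_le hb]
    exact continuousOn_const.mul hBc'
  have h1 := intervalIntegral.integral_eq_sub_of_hasDerivAt (a := t₀) (b := b) (f := u)
    (by rw [uIcc_of_le hb]; exact hu) hint
  have h2 : |∫ t in t₀..b, B t * v t ^ m| ≤ ∫ t in t₀..b, M ^ m * B t := by
    rw [← Real.norm_eq_abs]
    apply intervalIntegral.norm_integral_le_of_norm_le hb _ hintB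
    refine ae_of_all _ fun t ht => ?_
    have ht' : t ∈ Icc t₀ b := Ioc_subset_Icc_self ht
    have := hB0 t ht'.1
    rw [Real.norm_eq_abs, abs_mul, abs_pow, abs_of_nonneg this, mul_comm]
    gcongr
    exact hM t ht'
  have h3 : ∫ t in t₀..b, M ^ m * B t ≤ M ^ m * I := by
    rw [intervalIntegral.integral_const_mul, intervalIntegral.integral_of_le hb, hI]
    refine mul_le_mul_of_nonneg_left ?_ (by positivity)
    apply setIntegral_mono_set hBi
    · exact (ae_restrict_mem measurableSet_Ici).mono fun t ht => hB0 t ht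
    · exact (Ioc_subset_Icc_self.trans Icc_subset_Ici_self).eventuallyLE
  rw [h1] at h2
  have := abs_sub_abs_le_abs_sub (u b) (u t₀)
  linarith

lemma ef_vbound (t₀ b K : ℝ) (ht₀ : 1 ≤ t₀) (hb : t₀ ≤ b) (hK : 0 ≤ K) (u v : ℝ → ℝ)
    (hv : ∀ t ∈ Icc t₀ b, HasDerivAt v (u t / t ^ 2) t)
    (hu : ∀ t ∈ Icc t₀ b, |u t| ≤ K) : |v b - v t₀| ≤ K / t₀ := by
  have hd : ∀ t ∈ Icc t₀ b, HasDerivAt (fun t => K / t₀ - K * t⁻¹) (K / t ^ 2) t := by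
    intro t ht
    have ht1 : t ≠ 0 := by have := ht.1; intro h; linarith
    have := ((hasDerivAt_inv ht1).const_mul K).const_sub (K / t₀)
    have he : K / t ^ 2 = -(K * -(t ^ 2)⁻¹) := by ring
    rw [he]
    exact this
  have := image_norm_le_of_norm_deriv_right_le_deriv_boundary' (a := t₀) (b := b)
    (f := fun t => v t - v t₀) (f' := fun t => u t / t ^ 2)
    (B := fun t => K / t₀ - K * t⁻¹) (B' := fun t => K / t ^ 2)
    (fun t ht => ((hv t ht).sub_const _).continuousAt.continuousWithinAt)
    (fun t ht => ((hv t (Ico_subset_Icc_self ht)).sub_const _).hasDerivWithinAt)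
    (by simp [div_eq_mul_inv])
    (fun t ht => (hd t ht).continuousAt.continuousWithinAt)
    (fun t ht => (hd t (Ico_subset_Icc_self ht)).hasDerivWithinAt)
    (fun t ht => by
      rw [norm_div, Real.norm_eq_abs, norm_pow, Real.norm_eq_abs, sq_abs]
      gcongr
      exact hu t (Ico_subset_Icc_self ht)) (x := b) ⟨hb, le_rfl⟩
  simp only [Real.norm_eq_abs] at this
  have h2 : 0 ≤ K * b⁻¹ := by
    have : 0 < b := by linarith
    positivity
  linarith

/-- Bootstrap. -/
lemma ef_bootstrap (m : ℕ) (t₀ b M I : ℝ) (ht₀ : 1 ≤ t₀) (hb : t₀ ≤ b) (B u v : ℝ → ℝ)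
    (hBc : ContinuousOn B (Ici t₀)) (hB0 : ∀ t ∈ Ici t₀, 0 ≤ B t)
    (hBi : IntegrableOn B (Ici t₀)) (hI : I = ∫ t in Ici t₀, B t)
    (hv : ∀ t ∈ Icc t₀ b, HasDerivAt v (u t / t ^ 2) t)
    (hu : ∀ t ∈ Icc t₀ b, HasDerivAt u (B t * v t ^ m) t)
    (hM : M = 1 + |v t₀|)
    (hsmall : (|u t₀| + M ^ m * I) / t₀ < 1) :
    ∀ t ∈ Icc t₀ b, |v t| ≤ M := by
  have hI0 : 0 ≤ I := by
    rw [hI]; exact setIntegral_nonneg measurableSet_Ici hB0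
  have hM0 : 0 ≤ M := by rw [hM]; positivity
  have hvc : ContinuousOn v (Icc t₀ b) := fun t ht => (hv t ht).continuousAt.continuousWithinAt
  suffices h : ∀ t ∈ Icc t₀ b, |v t - v t₀| < 1 by
    intro t ht
    have := abs_sub_abs_le_abs_sub (v t) (v t₀)
    linarith [h t ht]
  by_contra! hcon
  obtain ⟨s, hs, hs1⟩ := hcon
  have hcont : ContinuousOn (fun t => |v t - v t₀|) (Icc t₀ b) :=
    (hvc.sub continuousOn_const).abs
  have hcl : IsCompact (Icc t₀ b ∩ (fun t => |v t - v t₀|) ⁻¹' Ici 1) :=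
    isCompact_Icc.of_isClosed_subset (hcont.preimage_isClosed_of_isClosed isClosed_Icc isClosed_Ici)
      inter_subset_left
  obtain ⟨c, ⟨hc, hc1⟩, hmin⟩ := hcl.exists_isLeast ⟨s, hs, hs1⟩
  have hlt : ∀ t ∈ Ico t₀ c, |v t - v t₀| ≤ 1 := by
    intro t ht
    by_contra! h
    exact absurd (hmin ⟨⟨ht.1, ht.2.le.trans hc.2⟩, h.le⟩) (not_le.2 ht.2)
  have htc : t₀ < c := by
    rcases hc.1.eq_or_lt with h | h
    · rw [← h] at hc1; simp at hc1; linarith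
    · exact h
  have hle : ∀ t ∈ Icc t₀ c, |v t - v t₀| ≤ 1 := by
    intro t ht
    rw [← closure_Ico htc.ne] at ht
    have hsub : closure (Ico t₀ c) ⊆ Icc t₀ b := by
      rw [closure_Ico htc.ne]; exact Icc_subset_Icc le_rfl hc.2
    exact le_on_closure hlt (hcont.mono hsub) continuousOn_const ht
  have hvM : ∀ t ∈ Icc t₀ c, |v t| ≤ M := by
    intro t ht
    have := abs_sub_abs_le_abs_sub (v t) (v t₀)
    linarith [hle t ht]
  have hub : ∀ t ∈ Icc t₀ c, |u t| ≤ |u t₀| + M ^ m * I := by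
    intro t ht
    have hsub : Icc t₀ t ⊆ Icc t₀ b := Icc_subset_Icc le_rfl (ht.2.trans hc.2)
    exact ef_apriori m t₀ t M I ht₀ ht.1 B u v hBc hB0 hBi hI (fun s hs => hv s (hsub hs))
      (fun s hs => hu s (hsub hs)) (fun s hs => hvM s ⟨hs.1, hs.2.trans ht.2⟩)
  have := ef_vbound t₀ c _ ht₀ hc.1 (by positivity) u v
    (fun s hs => hv s ⟨hs.1, hs.2.trans hc.2⟩) hub
  simp only [mem_preimage, mem_Ici] at hc1
  linarith

lemma ef_small (n : ℕ) (hn : 1 ≤ n) (t₀ u₀ M I : ℝ) (ht₀ : 1 ≤ t₀) (hM : 1 ≤ M) (hI : 0 ≤ I)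
    (h : 4 / t₀ * (1 + u₀ ^ 2 / 2 + I) ≤ 1 / (2 * n) * M ^ (-(2 * n : ℤ))) :
    (|u₀| + M ^ (2 * n - 1) * I) / t₀ < 1 := by
  have hn' : (1:ℝ) ≤ n := by exact_mod_cast hn
  have hz : M ^ (-(2 * n : ℤ)) = (M ^ (2 * n))⁻¹ := by
    rw [zpow_neg]; norm_cast
  rw [hz] at h
  have hP : 1 ≤ M ^ (2 * n) := one_le_pow₀ hM
  have hQ : M ^ (2 * n - 1) ≤ M ^ (2 * n) := pow_le_pow_right₀ hM (by omega)
  have ht : 0 < t₀ := by linarith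
  rw [div_lt_one ht]
  have h3 : 4 * (1 + u₀ ^ 2 / 2 + I) * M ^ (2 * n) ≤ t₀ := by
    have h5 : 1 / (2 * (n:ℝ)) * (M ^ (2 * n))⁻¹ ≤ (M ^ (2 * n))⁻¹ := by
      apply mul_le_of_le_one_left (by positivity)
      rw [div_le_one (by positivity)]; linarith
    have h6 := h.trans h5
    rw [div_mul_eq_mul_div, inv_eq_one_div, div_le_div_iff₀ ht (by positivity)] at h6
    linarith
  have h4 : |u₀| ≤ 1 + u₀ ^ 2 / 2 := by
    rw [← sq_abs]; nlinarith [sq_nonneg (|u₀| - 1)]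
  have h7 : M ^ (2 * n - 1) * I ≤ M ^ (2 * n) * I := by gcongr
  have h8 : (1 + u₀ ^ 2 / 2) ≤ (1 + u₀ ^ 2 / 2) * M ^ (2 * n) :=
    le_mul_of_one_le_right (by positivity) hP
  have h9 : 0 ≤ M ^ (2 * n) * I := by positivity
  nlinarith [sq_nonneg u₀]

/-- Asymptotics of global solutions. -/
lemma ef_asymp (m : ℕ) (t₀ M K : ℝ) (ht₀ : 1 ≤ t₀) (B u v : ℝ → ℝ)
    (hBc : ContinuousOn B (Ici t₀)) (hB0 : ∀ t ∈ Ici t₀, 0 ≤ B t)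
    (hBi : IntegrableOn B (Ici t₀))
    (hv : ∀ t ∈ Ici t₀, HasDerivAt v (u t / t ^ 2) t)
    (hu : ∀ t ∈ Ici t₀, HasDerivAt u (B t * v t ^ m) t)
    (hM : ∀ t ∈ Ici t₀, |v t| ≤ M) (hK : ∀ t ∈ Ici t₀, |u t| ≤ K) :
    ∃ p q : ℝ, Tendsto v atTop (nhds p) ∧ Tendsto (fun t => t * v t - (p * t + q)) atTop (nhds 0) := by
  have hvc : ContinuousOn v (Ici t₀) := fun t ht => (hv t ht).continuousAt.continuousWithinAt
  have huc : ContinuousOn u (Ici t₀) := fun t ht => (hu t ht).continuousAt.continuousWithinAt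
  have hui : IntegrableOn (fun t => B t * v t ^ m) (Ioi t₀) := by
    apply Integrable.mono' ((hBi.mono_set Ioi_subset_Ici_self).const_mul (M ^ m))
    · exact ((hBc.mul (hvc.pow m)).mono Ioi_subset_Ici_self).aestronglyMeasurable measurableSet_Ioi
    · refine (ae_restrict_mem measurableSet_Ioi).mono fun t ht => ?_
      have ht' : t ∈ Ici t₀ := Ioi_subset_Ici_self ht
      have := hB0 t ht'
      rw [Real.norm_eq_abs, abs_mul, abs_pow, abs_of_nonneg this, mul_comm]
      gcongr
      exact hM t ht'
  have hvi : IntegrableOn (fun t => u t / t ^ 2) (Ioi t₀) := by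
    apply Integrable.mono' ((integrableOn_Ioi_rpow_of_lt (a := -2) (by norm_num)
      (show 0 < t₀ by linarith)).const_mul K)
    · refine ContinuousOn.aestronglyMeasurable ?_ measurableSet_Ioi
      refine (huc.mono Ioi_subset_Ici_self).div (by fun_prop) fun t ht => ?_
      have : 0 < t := by have := mem_Ioi.1 ht; linarith
      positivity
    · refine (ae_restrict_mem measurableSet_Ioi).mono fun t ht => ?_
      have ht' : t ∈ Ici t₀ := Ioi_subset_Ici_self ht
      have h0 : 0 < t := by have := mem_Ioi.1 ht; linarith
      rw [Real.rpow_neg h0.le, norm_div, Real.norm_eq_abs, norm_pow, Real.norm_eq_abs, sq_abs,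
        div_eq_mul_inv]
      norm_cast
      gcongr
      exact hK t ht'
  have hul := tendsto_limUnder_of_hasDerivAt_of_integrableOn_Ioi
    (fun t ht => hu t (Ioi_subset_Ici_self ht)) hui
  have hvl := tendsto_limUnder_of_hasDerivAt_of_integrableOn_Ioi
    (fun t ht => hv t (Ioi_subset_Ici_self ht)) hvi
  set p := limUnder atTop v
  set q := limUnder atTop u
  refine ⟨p, -q, hvl, ?_⟩
  have hl : Tendsto (fun t => (v t - p) / t⁻¹) atTop (nhds (-q)) := by
    apply HasDerivAt.lhopital_zero_atTop (f' := fun t => u t / t ^ 2) (g' := fun t => -(t ^ 2)⁻¹)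
    · filter_upwards [eventually_ge_atTop t₀] with t ht using (hv t ht).sub_const _
    · filter_upwards [eventually_ge_atTop t₀] with t ht
      exact hasDerivAt_inv (by linarith)
    · filter_upwards [eventually_ge_atTop t₀] with t ht
      have : 0 < t := by linarith
      simp [this.ne']
    · simpa using hvl.sub_const p
    · exact tendsto_inv_atTop_zero
    · apply hul.neg.congr'
      filter_upwards [eventually_ge_atTop t₀] with t ht
      have : t ≠ 0 := by linarith
      field_simp
  have := hl.sub_const (-q)
  rw [sub_self] at this
  apply this.congr'
  filter_upwards [eventually_ge_atTop t₀] with t ht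
  rw [div_inv_eq_mul]; ring

/-- Emden–Fowler equation `x″ + A(t)x^{2n−1} = 0` with `A ≤ 0` and
`∫_{t₀}^{∞} s^{2n}|A(s)| ds < ∞`: every (maximal, i.e. non-extendable) solution whose
initial data `u₀ = t₀x′(t₀) − x(t₀)`, `v₀ = x(t₀)/t₀` satisfy
`(4/t₀)(1 + u₀²/2 + ∫_{t₀}^{∞} t^{2n}|A(t)| dt) ≤ (1/(2n))·(1+|v₀|)^{−2n}` is defined on
all of `[t₀, ∞)` and satisfies either `x(t) = o(t)` or `x(t) = x₁t + x₂ + o(1)` with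
`x₁ ≠ 0`, as `t → +∞`. -/
theorem emden_fowler_negative_coefficient
    (n : ℕ) (hn : 1 ≤ n) (t₀ : ℝ) (ht₀ : 1 ≤ t₀) (A : ℝ → ℝ)
    (hA_cont : ContinuousOn A (Set.Ici t₀))
    (hA_nonpos : ∀ t ∈ Set.Ici t₀, A t ≤ 0)
    (hA_int : IntegrableOn (fun s => s ^ (2 * n) * |A s|) (Set.Ici t₀))
    (Tinf : EReal) (hT : (t₀ : EReal) < Tinf)
    (x x' x'' : ℝ → ℝ)
    (hx : ∀ t : ℝ, t₀ ≤ t → (t : EReal) < Tinf → HasDerivAt x (x' t) t)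
    (hx' : ∀ t : ℝ, t₀ ≤ t → (t : EReal) < Tinf → HasDerivAt x' (x'' t) t)
    (heq : ∀ t : ℝ, t₀ ≤ t → (t : EReal) < Tinf →
      x'' t + A t * x t ^ (2 * n - 1) = 0)
    (hmax : ∀ (y y' y'' : ℝ → ℝ) (T' : EReal), Tinf < T' →
      (∀ t : ℝ, t₀ ≤ t → (t : EReal) < T' → HasDerivAt y (y' t) t) →
      (∀ t : ℝ, t₀ ≤ t → (t : EReal) < T' → HasDerivAt y' (y'' t) t) →
      (∀ t : ℝ, t₀ ≤ t → (t : EReal) < T' → y'' t + A t * y t ^ (2 * n - 1) = 0) →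
      ¬ (∀ t : ℝ, t₀ ≤ t → (t : EReal) < Tinf → y t = x t))
    (hinit : 4 / t₀ * (1 + (t₀ * x' t₀ - x t₀) ^ 2 / 2 +
        ∫ t in Set.Ici t₀, t ^ (2 * n) * |A t|) ≤
      1 / (2 * n) * (1 + |x t₀ / t₀|) ^ (-(2 * n : ℤ))) :
    Tinf = ⊤ ∧
      ((fun t => x t) =o[atTop] (fun t : ℝ => t) ∨
        ∃ x₁ x₂ : ℝ, x₁ ≠ 0 ∧
          Tendsto (fun t => x t - (x₁ * t + x₂)) atTop (nhds 0)) := by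
  have ht0 : 0 < t₀ := by linarith
  set m := 2 * n - 1 with hm
  have hmn : 2 * n = m + 1 := by omega
  set B : ℝ → ℝ := fun t => t ^ (2 * n) * |A t| with hBdef
  set u : ℝ → ℝ := fun t => t * x' t - x t with hudef
  set v : ℝ → ℝ := fun t => x t / t with hvdef
  have hBc : ContinuousOn B (Ici t₀) := (continuousOn_id.pow _).mul hA_cont.abs
  have hB0 : ∀ t ∈ Ici t₀, 0 ≤ B t := fun t ht => by
    have : 0 < t := lt_of_lt_of_le ht0 ht
    positivity
  obtain ⟨I, hI⟩ : ∃ I, I = ∫ t in Ici t₀, B t := ⟨_, rfl⟩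
  have hI0 : 0 ≤ I := by
    rw [hI]; exact setIntegral_nonneg measurableSet_Ici hB0
  have hxx : ∀ t : ℝ, t₀ ≤ t → (t : EReal) < Tinf → HasDerivAt x' (-(A t * x t ^ m)) t := by
    intro t h1 h2
    have h3 := heq t h1 h2
    have h4 : x'' t = -(A t * x t ^ m) := by linarith
    rw [← h4]
    exact hx' t h1 h2
  have hv : ∀ t : ℝ, t₀ ≤ t → (t : EReal) < Tinf → HasDerivAt v (u t / t ^ 2) t := by
    intro t h1 h2
    have h0 : t ≠ 0 := by linarith
    have he : u t / t ^ 2 = (x' t * id t - x t * 1) / id t ^ 2 := by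
      simp only [hudef, id]
      ring
    rw [he]
    exact (hx t h1 h2).div (hasDerivAt_id t) h0
  have hu : ∀ t : ℝ, t₀ ≤ t → (t : EReal) < Tinf → HasDerivAt u (B t * v t ^ m) t := by
    intro t h1 h2
    have h0 : t ≠ 0 := by linarith
    have he : B t * v t ^ m = 1 * x' t + id t * -(A t * x t ^ m) - x' t := by
      simp only [hBdef, hvdef, id, abs_of_nonpos (hA_nonpos t h1), hmn, div_pow]
      field_simp
      ring
    rw [he]
    exact ((hasDerivAt_id t).mul (hxx t h1 h2)).sub (hx t h1 h2)
  obtain ⟨M, hM⟩ : ∃ M, M = 1 + |v t₀| := ⟨_, rfl⟩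
  have hM1 : 1 ≤ M := by rw [hM]; linarith [abs_nonneg (v t₀)]
  have hsmall : (|u t₀| + M ^ m * I) / t₀ < 1 := by
    apply ef_small n hn t₀ (u t₀) M I ht₀ hM1 hI0
    rw [hI, hM]
    exact hinit
  have hlt : ∀ b t : ℝ, (b : EReal) < Tinf → t ≤ b → (t : EReal) < Tinf := fun b t h1 h2 =>
    lt_of_le_of_lt (EReal.coe_le_coe_iff.2 h2) h1
  have hvM : ∀ t : ℝ, t₀ ≤ t → (t : EReal) < Tinf → |v t| ≤ M := by
    intro t h1 h2
    exact ef_bootstrap m t₀ t M I ht₀ h1 B u v hBc hB0 hA_int hI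
      (fun s hs => hv s hs.1 (hlt t s h2 hs.2)) (fun s hs => hu s hs.1 (hlt t s h2 hs.2)) hM hsmall
      t ⟨h1, le_rfl⟩
  obtain ⟨K, hKdef⟩ : ∃ K, K = |u t₀| + M ^ m * I := ⟨_, rfl⟩
  have hK0 : 0 ≤ K := by rw [hKdef]; positivity
  have huK : ∀ t : ℝ, t₀ ≤ t → (t : EReal) < Tinf → |u t| ≤ K := by
    intro t h1 h2
    rw [hKdef]
    exact ef_apriori m t₀ t M I ht₀ h1 B u v hBc hB0 hA_int hI
      (fun s hs => hv s hs.1 (hlt t s h2 hs.2)) (fun s hs => hu s hs.1 (hlt t s h2 hs.2))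
      (fun s hs => hvM s hs.1 (hlt t s h2 hs.2))
  have hxv : ∀ t : ℝ, t₀ ≤ t → x t = t * v t := by
    intro t h1
    have h0 : t ≠ 0 := by linarith
    simp only [hvdef]; field_simp
  have hTop : Tinf = ⊤ := by
    by_contra hne
    have hbot : Tinf ≠ ⊥ := (bot_le.trans_lt hT).ne'
    obtain ⟨T, rfl⟩ : ∃ T : ℝ, Tinf = (T : EReal) := ⟨Tinf.toReal, (EReal.coe_toReal hne hbot).symm⟩
    simp only [EReal.coe_lt_coe_iff] at hT hx hxx hvM huK
    have hbx : ∀ t, t₀ ≤ t → t < T → |x t| ≤ K + T * M := by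
      intro t h1 h2
      have h0 : 0 ≤ t := by linarith
      rw [hxv t h1, abs_mul, abs_of_nonneg h0]
      have h3 : t * |v t| ≤ T * M := by
        have := hvM t h1 h2
        have hT0 : 0 ≤ T := by linarith
        gcongr
      linarith
    have hbx' : ∀ t, t₀ ≤ t → t < T → |x' t| ≤ K + T * M := by
      intro t h1 h2
      have h0 : 0 < t := by linarith
      have h3 : x' t = u t / t + v t := by
        simp only [hudef, hvdef]; field_simp; ring
      have h4 : |u t / t| ≤ K := by
        rw [abs_div, abs_of_pos h0]
        exact (div_le_self (abs_nonneg _) (by linarith)).trans (huK t h1 h2)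
      have h5 := abs_add_le (u t / t) (v t)
      have h6 : M ≤ T * M := le_mul_of_one_le_left (by linarith) (by linarith)
      rw [h3]
      linarith [hvM t h1 h2]
    have hR : 0 ≤ K + T * M := (abs_nonneg _).trans (hbx t₀ le_rfl hT)
    obtain ⟨T', y, y', hTT, hy, hy', hyx⟩ :=
      ef_extend m t₀ T _ hT A x x' hA_cont hR hx hxx hbx hbx'
    refine hmax y y' (fun t => -(A t * y t ^ m)) (T' : EReal) (EReal.coe_lt_coe_iff.2 hTT)
      ?_ ?_ ?_ ?_
    · exact fun t h1 h2 => hy t h1 (EReal.coe_lt_coe_iff.1 h2)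
    · exact fun t h1 h2 => hy' t h1 (EReal.coe_lt_coe_iff.1 h2)
    · intro t h1 h2
      ring
    · exact fun t h1 h2 => hyx t h1 (EReal.coe_lt_coe_iff.1 h2)
  refine ⟨hTop, ?_⟩
  have hall : ∀ t : ℝ, (t : EReal) < Tinf := fun t => by rw [hTop]; exact EReal.coe_lt_top t
  obtain ⟨p, q, hp, hq⟩ := ef_asymp m t₀ M K ht₀ B u v hBc hB0 hA_int
    (fun t ht => hv t ht (hall t)) (fun t ht => hu t ht (hall t))
    (fun t ht => hvM t ht (hall t)) (fun t ht => huK t ht (hall t))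
  by_cases hp0 : p = 0
  · left
    rw [isLittleO_iff_tendsto' ?_]
    · rw [← hp0]; exact hp
    · filter_upwards [eventually_ge_atTop t₀] with t ht h0
      linarith
  · right
    refine ⟨p, q, hp0, hq.congr' ?_⟩
    filter_upwards [eventually_ge_atTop t₀] with t ht
    rw [hxv t ht]
end
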